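/- arXiv:1406.3263 — 3 statements merged into one kernel-verified Lean document; each statement's English description precedes it below -/
import Mathlib

section
/- Consider a graph-directed construction whose directed graph G is strongly connected, i.e. for all vertices u, v there is a directed path from u to v. Suppose t_0 ≥ 0 is such that the spectral radius of the matrix A^{t_0} equals 1. Then the Hausdorff dimension of K* = ⋃_{u=1}^n C_u equals t_0. -/
open Set
open scoped Classical

/-!
Perron–Frobenius gives positive weights `y` with `A^t y = y`, that is,
`y u = ∑ v, ratio u v ^ t * y v`. Summed over the cylinders of level `k` in `C u`, the `t`-th powers
of the diameters therefore stay below a fixed multiple of `y u`, so `H^t (C u)` is finite. In the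
other direction, the pieces of `C u` lie at mutual distance at least some `g > 0`, so a cover of
`C u` by sets of diameter less than `g` splits into covers of the pieces. Rescaling these to covers
of the components `C v` shows by induction that no cover of `C u` costs less than a fixed multiple
of `y u`, so `H^t (C u)` is positive.
-/

open scoped ENNReal NNReal Topology

section Bounds

open Filter

theorem exists_lt_smul_le_of_forall_lt {ι : Type*} [Finite ι] {x y : ι → ℝ} {ρ : ℝ≥0}
    (h : ∀ i, ρ * x i < y i) : ∃ l : ℝ≥0, ρ < l ∧ (l : ℝ) • x ≤ y := by
  have hnear : ∀ᶠ l : ℝ≥0 in 𝓝[>] ρ, ∀ i, l * x i < y i := by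
    refine eventually_all.2 fun i => nhdsWithin_le_nhds ?_
    have hcont : Continuous fun l : ℝ≥0 => l * x i := by fun_prop
    exact hcont.tendsto ρ |>.eventually_lt_const (h i)
  obtain ⟨l, hl, hρl⟩ := (hnear.and self_mem_nhdsWithin).exists
  exact ⟨l, hρl, fun i => (hl i).le⟩

theorem exists_pos_forall_le {ι : Type*} [Finite ι] {η : ι → ℝ≥0} (hη : ∀ i, 0 < η i) :
    ∃ δ : ℝ≥0, 0 < δ ∧ ∀ i, δ ≤ η i := by
  have hnear : ∀ᶠ δ : ℝ≥0 in 𝓝[>] 0, ∀ i, δ ≤ η i :=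
    eventually_all.2 fun i => nhdsWithin_le_nhds (eventually_le_nhds (hη i))
  obtain ⟨δ, hδ, hδ₀⟩ := (hnear.and self_mem_nhdsWithin).exists
  exact ⟨δ, hδ₀, hδ⟩

theorem exists_forall_ediam_le {ι X : Type*} [Finite ι] [PseudoMetricSpace X] {A : ι → Set X}
    (hA : ∀ i, Bornology.IsBounded (A i)) : ∃ D : ℝ≥0, ∀ i, Metric.ediam (A i) ≤ D := by
  obtain ⟨D, hD⟩ := Finite.exists_le fun i => (Metric.ediam (A i)).toNNReal
  exact ⟨D, fun i => (ENNReal.coe_toNNReal (hA i).ediam_ne_top).symm.trans_le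
    (ENNReal.coe_le_coe.2 (hD i))⟩

theorem tendsto_pow_mul_atTop_nhds_zero {q : ℝ≥0} (hq : q < 1) (a : ℝ≥0) :
    Tendsto (fun k : ℕ => (q : ℝ≥0∞) ^ k * a) atTop (𝓝 0) := by
  simpa using ENNReal.Tendsto.mul_const
    (ENNReal.tendsto_pow_atTop_nhds_zero_of_lt_one (ENNReal.coe_lt_one_iff.2 hq))
    (.inr ENNReal.coe_ne_top)

end Bounds

section Perron

open Matrix Finset Filter

variable {V : Type*}

section Nonnegative

variable {R : Type*} [CommRing R] [LinearOrder R] {A : Matrix V V R}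

theorem isIrreducible_of_transGen (hA : ∀ i j, 0 ≤ A i j)
    (h : ∀ i j, Relation.TransGen (fun i j => 0 < A i j) i j) : A.IsIrreducible := by
  let := A.toQuiver
  refine ⟨hA, fun i j => ?_⟩
  induction h i j with
  | single hij => exact ⟨(Quiver.Path.nil).cons ⟨hij⟩, by simp⟩
  | tail _ hij ih =>
    obtain ⟨p, -⟩ := ih
    exact ⟨p.cons ⟨hij⟩, by simp⟩

variable [IsStrictOrderedRing R] [Fintype V]

theorem mulVec_pos_of_pos (hA : ∀ i j, 0 < A i j) {x : V → R} (hx : 0 < x) (i : V) :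
    0 < (A *ᵥ x) i := by
  obtain ⟨hx₀, j, hj⟩ := Pi.lt_def.1 hx
  exact sum_pos' (fun k _ => mul_nonneg (hA i k).le (hx₀ k)) ⟨j, mem_univ j, mul_pos (hA i j) hj⟩

theorem mulVec_mono_of_nonneg (hA : ∀ i j, 0 ≤ A i j) : Monotone (A *ᵥ ·) :=
  fun _ _ hxy i => sum_le_sum fun j _ => mul_le_mul_of_nonneg_left (hxy j) (hA i j)

theorem exists_commute_pos_of_isIrreducible (hA : A.IsIrreducible) :
    ∃ P, Commute P A ∧ ∀ i j, 0 < P i j := by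
  choose k _ hk using (isIrreducible_iff_exists_pow_pos hA.nonneg).1 hA
  refine ⟨∑ i, ∑ j, A ^ k i j, ?_, fun i j => ?_⟩
  · exact Commute.sum_left _ _ _ fun i _ => Commute.sum_left _ _ _ fun j _ => Commute.pow_self A _
  · have hnonneg (i' j' : V) : 0 ≤ (A ^ k i' j') i j := pow_apply_nonneg hA.nonneg _ _ _
    simp only [Matrix.sum_apply]
    exact sum_pos' (fun i' _ => sum_nonneg fun j' _ => hnonneg i' j')
      ⟨i, mem_univ i, sum_pos' (fun j' _ => hnonneg i j') ⟨j, mem_univ j, hk i j⟩⟩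

theorem pow_smul_le_pow_mulVec [DecidableEq V] (hA : ∀ i j, 0 ≤ A i j) {w : V → R} {l : R}
    (hl : 0 ≤ l) (hw : l • w ≤ A *ᵥ w) (k : ℕ) : l ^ k • w ≤ (A ^ k) *ᵥ w := by
  induction k with
  | zero => simp
  | succ k ih =>
    calc l ^ (k + 1) • w = l ^ k • l • w := by rw [pow_succ, mul_smul]
      _ ≤ l ^ k • A *ᵥ w := smul_le_smul_of_nonneg_left hw (pow_nonneg hl k)
      _ = A *ᵥ l ^ k • w := (mulVec_smul A (l ^ k) w).symm
      _ ≤ A *ᵥ (A ^ k) *ᵥ w := mulVec_mono_of_nonneg hA ih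
      _ = (A ^ (k + 1)) *ᵥ w := by rw [mulVec_mulVec, pow_succ']

end Nonnegative

variable [Fintype V] [DecidableEq V] {A : Matrix V V ℝ}

section SpectralRadius

attribute [local instance] Matrix.linftyOpNormedRing Matrix.linftyOpNormedAlgebra

theorem pow_le_nnnorm_pow_of_smul_le_mulVec (hA : ∀ i j, 0 ≤ A i j) {w : V → ℝ} (hw : 0 < w)
    {l : ℝ≥0} (hle : (l : ℝ) • w ≤ A *ᵥ w) (k : ℕ) : l ^ k ≤ ‖A ^ k‖₊ := by
  have hpow : (l : ℝ) ^ k • w ≤ (A ^ k) *ᵥ w := pow_smul_le_pow_mulVec hA l.2 hle k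
  have hnorm : ‖(l : ℝ) ^ k • w‖ ≤ ‖(A ^ k) *ᵥ w‖ := by
    refine (pi_norm_le_iff_of_nonneg (norm_nonneg _)).2 fun i => ?_
    have hnonneg : 0 ≤ ((l : ℝ) ^ k • w) i := mul_nonneg (by positivity) (hw.le i)
    exact (Real.norm_of_nonneg hnonneg).trans_le
      ((hpow i).trans ((Real.le_norm_self _).trans (norm_le_pi_norm _ i)))
  have hmul : (l : ℝ) ^ k * ‖w‖ ≤ ‖A ^ k‖ * ‖w‖ := by
    calc (l : ℝ) ^ k * ‖w‖ = ‖(l : ℝ) ^ k • w‖ := by rw [norm_smul, norm_pow, NNReal.norm_eq]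
      _ ≤ ‖(A ^ k) *ᵥ w‖ := hnorm
      _ ≤ ‖A ^ k‖ * ‖w‖ := linfty_opNorm_mulVec _ _
  exact_mod_cast le_of_mul_le_mul_right hmul (norm_pos_iff.2 hw.ne')

-- The easy half of the Collatz–Wielandt formula, read off Gelfand's formula.
theorem le_spectralRadius_of_smul_le_mulVec (hA : ∀ i j, 0 ≤ A i j) {w : V → ℝ} (hw : 0 < w)
    {l : ℝ≥0} (hle : (l : ℝ) • w ≤ A *ᵥ w) :
    (l : ℝ≥0∞) ≤ spectralRadius ℂ (A.map ((↑) : ℝ → ℂ)) := by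
  have hnnnorm (k : ℕ) : ‖A.map ((↑) : ℝ → ℂ) ^ k‖₊ = ‖A ^ k‖₊ := by
    have hmap : A.map ((↑) : ℝ → ℂ) ^ k = (A ^ k).map (↑) :=
      (Matrix.map_pow A Complex.ofRealHom k).symm
    simp [hmap, linfty_opNNNorm_def]
  refine ge_of_tendsto (spectrum.pow_nnnorm_pow_one_div_tendsto_nhds_spectralRadius _) ?_
  filter_upwards [eventually_ne_atTop 0] with k hk
  calc (l : ℝ≥0∞) = ((l : ℝ≥0∞) ^ k) ^ (1 / k : ℝ) := by
        rw [one_div, ENNReal.pow_rpow_inv_natCast hk]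
    _ ≤ (‖A.map ((↑) : ℝ → ℂ) ^ k‖₊ : ℝ≥0∞) ^ (1 / k : ℝ) := by
        gcongr
        rw [hnnnorm]
        exact_mod_cast pow_le_nnnorm_pow_of_smul_le_mulVec hA hw hle k

theorem exists_pos_smul_le_mulVec [Nonempty V] (hA : ∀ i j, 0 ≤ A i j) {ρ : ℝ≥0}
    (hρ : spectralRadius ℂ (A.map ((↑) : ℝ → ℂ)) = ρ) :
    ∃ y : V → ℝ, 0 < y ∧ (ρ : ℝ) • y ≤ A *ᵥ y := by
  obtain ⟨μ, hμ, hμρ⟩ := spectrum.exists_nnnorm_eq_spectralRadius (A.map ((↑) : ℝ → ℂ))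
  rw [hρ, ENNReal.coe_inj] at hμρ
  rw [← Matrix.spectrum_toLin', ← Module.End.hasEigenvalue_iff_mem_spectrum] at hμ
  obtain ⟨z, hz, hz₀⟩ := hμ.exists_hasEigenvector
  rw [Module.End.mem_eigenspace_iff, toLin'_apply] at hz
  refine ⟨fun i => ‖z i‖, Pi.lt_def.2 ⟨fun i => norm_nonneg _, ?_⟩, fun i => ?_⟩
  · obtain ⟨i, hi⟩ := Function.ne_iff.1 hz₀
    exact ⟨i, norm_pos_iff.2 hi⟩
  · calc (ρ : ℝ) * ‖z i‖ = ‖(μ • z) i‖ := by simp [← hμρ]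
      _ = ‖∑ j, (A i j : ℂ) * z j‖ := by rw [← hz]; rfl
      _ ≤ ∑ j, ‖(A i j : ℂ) * z j‖ := norm_sum_le _ _
      _ = ∑ j, A i j * ‖z j‖ := by simp [abs_of_nonneg (hA i _)]

end SpectralRadius

-- If `ρ y ≤ A y` were not an equality, a positive matrix commuting with `A` would turn it into an
-- entrywise strict inequality, which leaves room for an `l > ρ` below the spectral radius.
theorem exists_pos_mulVec_eq_smul [Nonempty V] (hA : A.IsIrreducible) {ρ : ℝ≥0}
    (hρ : spectralRadius ℂ (A.map ((↑) : ℝ → ℂ)) = ρ) :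
    ∃ y : V → ℝ, (∀ i, 0 < y i) ∧ A *ᵥ y = (ρ : ℝ) • y := by
  obtain ⟨P, hPA, hP⟩ := exists_commute_pos_of_isIrreducible hA
  obtain ⟨y, hy, hle⟩ := exists_pos_smul_le_mulVec hA.nonneg hρ
  have hcomm : A *ᵥ P *ᵥ y = P *ᵥ A *ᵥ y := by rw [mulVec_mulVec, mulVec_mulVec, hPA.eq]
  refine ⟨P *ᵥ y, mulVec_pos_of_pos hP hy, ?_⟩
  rcases hle.eq_or_lt with heq | hlt
  · rw [hcomm, ← heq, mulVec_smul]
  · have hstrict (i : V) : ρ * (P *ᵥ y) i < (A *ᵥ P *ᵥ y) i := by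
      have hpos := mulVec_pos_of_pos hP (sub_pos.2 hlt) i
      rw [mulVec_sub, mulVec_smul, ← hcomm] at hpos
      exact sub_pos.1 hpos
    obtain ⟨l, hρl, hl⟩ := exists_lt_smul_le_of_forall_lt hstrict
    have hPy : 0 < P *ᵥ y :=
      Pi.lt_def.2 ⟨fun i => (mulVec_pos_of_pos hP hy i).le, Classical.arbitrary V,
        mulVec_pos_of_pos hP hy _⟩
    have hlρ := le_spectralRadius_of_smul_le_mulVec hA.nonneg hPy hl
    rw [hρ, ENNReal.coe_le_coe] at hlρ
    exact absurd hlρ hρl.not_ge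

end Perron

section TruncatedContent

open Finset Filter MeasureTheory

/-- The `t`-dimensional Hausdorff content of `K` computed from finite covers, where a set of
diameter less than `δ` is charged as if its diameter were `δ`. The truncation makes the content of
every nonempty set positive, which starts inductions over scales `δ`. -/
noncomputable def truncatedContent {X : Type*} [PseudoEMetricSpace X] (t : ℝ) (δ : ℝ≥0∞)
    (K : Set X) : ℝ≥0∞ :=
  ⨅ (𝒰 : Finset (Set X)) (_ : K ⊆ ⋃ U ∈ 𝒰, U), ∑ U ∈ 𝒰, max (Metric.ediam U) δ ^ t

variable {X : Type*} {t : ℝ} {δ : ℝ≥0∞}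

section PseudoEMetricSpace

variable [PseudoEMetricSpace X] {K : Set X}

theorem truncatedContent_le_sum {ι : Type*} (s : Finset ι) {U : ι → Set X}
    (hU : K ⊆ ⋃ i ∈ s, U i) :
    truncatedContent t δ K ≤ ∑ i ∈ s, max (Metric.ediam (U i)) δ ^ t := by
  have hcover : K ⊆ ⋃ W ∈ s.image U, W := by simpa using hU
  exact (iInf₂_le (s.image U) hcover).trans (sum_image_le_of_nonneg fun _ _ => zero_le)

theorem truncatedContent_mono (ht : 0 ≤ t) : Monotone fun δ => truncatedContent t δ K :=
  fun _ _ h => iInf₂_mono fun _ _ => sum_le_sum fun _ _ =>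
    ENNReal.rpow_le_rpow (max_le_max_left _ h) ht

theorem rpow_le_truncatedContent (ht : 0 ≤ t) (hK : K.Nonempty) :
    δ ^ t ≤ truncatedContent t δ K := by
  obtain ⟨x, hx⟩ := hK
  refine le_iInf₂ fun 𝒰 h𝒰 => ?_
  obtain ⟨U, hU, -⟩ := mem_iUnion₂.1 (h𝒰 hx)
  calc δ ^ t ≤ max (Metric.ediam U) δ ^ t := ENNReal.rpow_le_rpow (le_max_right _ _) ht
    _ ≤ ∑ U ∈ 𝒰, max (Metric.ediam U) δ ^ t :=
      single_le_sum (f := fun U => max (Metric.ediam U) δ ^ t) (fun _ _ => zero_le) hU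

theorem mul_ediam_preimage_le {Y : Type*} [PseudoEMetricSpace Y] {a : ℝ≥0∞} {f : X → Y}
    (hf : ∀ x y, a * edist x y ≤ edist (f x) (f y)) (U : Set Y) :
    a * Metric.ediam (f ⁻¹' U) ≤ Metric.ediam U := by
  simp only [Metric.ediam, ENNReal.mul_iSup]
  exact iSup₂_le fun x hx => iSup₂_le fun y hy =>
    (hf x y).trans (Metric.edist_le_ediam_of_mem hx hy)

theorem rpow_mul_truncatedContent_le_image {Y : Type*} [PseudoEMetricSpace Y] {a : ℝ≥0∞}
    {f : X → Y} (ht : 0 ≤ t) (hf : ∀ x y, a * edist x y ≤ edist (f x) (f y)) :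
    a ^ t * truncatedContent t δ K ≤ truncatedContent t (a * δ) (f '' K) := by
  refine le_iInf₂ fun 𝒰 h𝒰 => ?_
  have hcover : K ⊆ ⋃ U ∈ 𝒰, f ⁻¹' U := by simpa [image_subset_iff] using h𝒰
  calc a ^ t * truncatedContent t δ K
      ≤ a ^ t * ∑ U ∈ 𝒰, max (Metric.ediam (f ⁻¹' U)) δ ^ t := by
        gcongr
        exact truncatedContent_le_sum 𝒰 hcover
    _ = ∑ U ∈ 𝒰, max (a * Metric.ediam (f ⁻¹' U)) (a * δ) ^ t := by
        simp only [mul_sum, ← ENNReal.mul_rpow_of_nonneg _ _ ht, mul_max]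
    _ ≤ ∑ U ∈ 𝒰, max (Metric.ediam U) (a * δ) ^ t := by
        gcongr with U
        exact mul_ediam_preimage_le hf U

theorem min_sum_le_truncatedContent_iUnion {ι : Type*} [Fintype ι] {A : ι → Set X} {g : ℝ≥0∞}
    (ht : 0 ≤ t) (hsep : ∀ i j, i ≠ j → ∀ x ∈ A i, ∀ y ∈ A j, g ≤ edist x y) :
    min (g ^ t) (∑ i, truncatedContent t δ (A i)) ≤ truncatedContent t δ (⋃ i, A i) := by
  refine le_iInf₂ fun 𝒰 h𝒰 => ?_
  set cost : Set X → ℝ≥0∞ := fun U => max (Metric.ediam U) δ ^ t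
  by_cases hlarge : ∃ U ∈ 𝒰, g ≤ Metric.ediam U
  · obtain ⟨U, hU, hgU⟩ := hlarge
    calc min (g ^ t) _ ≤ g ^ t := min_le_left _ _
      _ ≤ cost U := ENNReal.rpow_le_rpow (hgU.trans (le_max_left _ _)) ht
      _ ≤ ∑ U ∈ 𝒰, cost U := single_le_sum (fun _ _ => zero_le) hU
  · push Not at hlarge
    let meeting (i : ι) : Finset (Set X) := {U ∈ 𝒰 | (A i ∩ U).Nonempty}
    have hcover (i : ι) : A i ⊆ ⋃ U ∈ meeting i, U := fun x hx => by
      obtain ⟨U, hU, hxU⟩ := mem_iUnion₂.1 (h𝒰 (mem_iUnion_of_mem i hx))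
      exact mem_iUnion₂.2 ⟨U, Finset.mem_filter.2 ⟨hU, x, hx, hxU⟩, hxU⟩
    have hdisj : (univ : Set ι).PairwiseDisjoint meeting := by
      refine fun i _ j _ hij => Finset.disjoint_left.2 fun U hi hj => ?_
      obtain ⟨hU, x, hx, hxU⟩ := Finset.mem_filter.1 hi
      obtain ⟨-, y, hy, hyU⟩ := Finset.mem_filter.1 hj
      exact (hlarge U hU).not_ge
        ((hsep i j hij x hx y hy).trans (Metric.edist_le_ediam_of_mem hxU hyU))
    calc min (g ^ t) (∑ i, truncatedContent t δ (A i))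
        ≤ ∑ i, truncatedContent t δ (A i) := min_le_right _ _
      _ ≤ ∑ i, ∑ U ∈ meeting i, cost U := sum_le_sum fun i _ => iInf₂_le (meeting i) (hcover i)
      _ = ∑ U ∈ Finset.univ.biUnion meeting, cost U := by
        rw [sum_biUnion (by simpa using hdisj)]
      _ ≤ ∑ U ∈ 𝒰, cost U :=
        sum_le_sum_of_subset (biUnion_subset.2 fun i _ => filter_subset _ _)

end PseudoEMetricSpace

theorem exists_pos_add_rpow_le {d ε : ℝ≥0∞} (hd : d ≠ ⊤) (ht : 0 ≤ t) (hε : ε ≠ 0) :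
    ∃ η : ℝ≥0, 0 < η ∧ (d + 2 * η) ^ t ≤ d ^ t + ε := by
  have hcont : Continuous fun η : ℝ≥0 => (d + 2 * η) ^ t :=
    ENNReal.continuous_rpow_const.comp (by fun_prop (disch := exact ENNReal.ofNat_ne_top))
  have hlt : (d + 2 * (0 : ℝ≥0)) ^ t < d ^ t + ε := by
    simpa using ENNReal.lt_add_right (ENNReal.rpow_ne_top_of_nonneg ht hd) hε
  have hnear : ∀ᶠ η : ℝ≥0 in 𝓝[>] 0, (d + 2 * η) ^ t < d ^ t + ε :=
    nhdsWithin_le_nhds (hcont.tendsto 0 |>.eventually_lt_const hlt)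
  obtain ⟨η, hη, hη₀⟩ := (hnear.and self_mem_nhdsWithin).exists
  exact ⟨η, hη₀, hη.le⟩

-- Thicken the sets of the cover to open sets, at a total cost of `ε`, and extract a finite
-- subcover; any `δ` below the finitely many thickening radii then works.
theorem exists_truncatedContent_le_tsum_add [PseudoEMetricSpace X] {K : Set X} (hK : IsCompact K)
    (ht : 0 ≤ t) {s : ℕ → Set X} (hs : K ⊆ ⋃ n, s n) (hfin : ∀ n, Metric.ediam (s n) ≠ ⊤)
    {ε : ℝ≥0∞} (hε : ε ≠ 0) :
    ∃ δ : ℝ≥0, 0 < δ ∧ truncatedContent t δ K ≤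
      (∑' n, ⨆ _ : (s n).Nonempty, Metric.ediam (s n) ^ t) + ε := by
  obtain ⟨e, he, hesum⟩ := ENNReal.exists_pos_sum_of_countable' hε ℕ
  choose η hη hle using fun n => exists_pos_add_rpow_le (hfin n) ht (he n).ne'
  have hopen : K ⊆ ⋃ n, Metric.thickening (η n) (s n) :=
    hs.trans (iUnion_mono fun n => Metric.self_subset_thickening (by exact_mod_cast hη n) _)
  obtain ⟨T, hT⟩ := hK.elim_finite_subcover _ (fun _ => Metric.isOpen_thickening) hopen
  obtain ⟨δ, hδ, hδη⟩ := exists_pos_forall_le fun n : T => hη n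
  have hcover : K ⊆ ⋃ n ∈ T.filter fun n => (s n).Nonempty, Metric.thickening (η n) (s n) :=
    fun x hx => by
      obtain ⟨n, hn, hxn⟩ := mem_iUnion₂.1 (hT hx)
      obtain ⟨z, hz, -⟩ := (Metric.mem_thickening_iff_exists_edist_lt _ _).1 hxn
      exact mem_iUnion₂.2 ⟨n, Finset.mem_filter.2 ⟨hn, z, hz⟩, hxn⟩
  refine ⟨δ, hδ, ?_⟩
  calc truncatedContent t δ K
      ≤ ∑ n ∈ T with (s n).Nonempty, max (Metric.ediam (Metric.thickening (η n) (s n))) δ ^ t :=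
        truncatedContent_le_sum _ hcover
    _ ≤ ∑ n ∈ T with (s n).Nonempty, ((⨆ _ : (s n).Nonempty, Metric.ediam (s n) ^ t) + e n) := by
        refine sum_le_sum fun n hn => ?_
        obtain ⟨hnT, hne⟩ := Finset.mem_filter.1 hn
        have hδn : (δ : ℝ≥0∞) ≤ 2 * η n :=
          (ENNReal.coe_le_coe.2 (hδη ⟨n, hnT⟩)).trans (le_mul_of_one_le_left' one_le_two)
        rw [iSup_pos hne]
        exact (ENNReal.rpow_le_rpow (max_le (Metric.ediam_thickening_le _)
          (hδn.trans le_add_self)) ht).trans (hle n)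
    _ ≤ ∑' n, ((⨆ _ : (s n).Nonempty, Metric.ediam (s n) ^ t) + e n) := ENNReal.sum_le_tsum _
    _ = (∑' n, ⨆ _ : (s n).Nonempty, Metric.ediam (s n) ^ t) + ∑' n, e n := ENNReal.tsum_add
    _ ≤ (∑' n, ⨆ _ : (s n).Nonempty, Metric.ediam (s n) ^ t) + ε := by gcongr

theorem le_hausdorffMeasure_of_le_truncatedContent [EMetricSpace X] [MeasurableSpace X]
    [BorelSpace X] {K : Set X} (hK : IsCompact K) (ht : 0 ≤ t) {m : ℝ≥0∞}
    (hm : ∀ δ : ℝ≥0, 0 < δ → m ≤ truncatedContent t δ K) : m ≤ μH[t] K := by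
  rw [Measure.hausdorffMeasure_apply]
  refine le_iSup₂_of_le 1 one_pos (le_iInf₂ fun s hs => le_iInf fun hdiam => ?_)
  refine ENNReal.le_of_forall_pos_le_add fun ε hε _ => ?_
  obtain ⟨δ, hδ, hle⟩ := exists_truncatedContent_le_tsum_add hK ht hs
    (fun n => ne_top_of_le_ne_top ENNReal.one_ne_top (hdiam n)) (ENNReal.coe_ne_zero.2 hε.ne')
  exact (hm δ hδ).trans hle

end TruncatedContent

/-- A graph-directed system of contracting similitudes of a metric space `X`: each edge `u → v` of
a directed graph on `V` carries a map `map u v` multiplying distances by `ratio u v`. The values of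
`map` and `ratio` at pairs that are not edges are irrelevant. -/
structure GraphDirectedSystem (V X : Type*) [MetricSpace X] where
  Edge : V → V → Prop
  ratio : V → V → ℝ≥0
  map : V → V → X → X
  ratio_pos : ∀ {u v}, Edge u v → 0 < ratio u v
  ratio_lt_one : ∀ {u v}, Edge u v → ratio u v < 1
  edist_map : ∀ {u v}, Edge u v → ∀ x y, edist (map u v x) (map u v y) = ratio u v * edist x y

namespace GraphDirectedSystem

open Matrix Finset Filter MeasureTheory

universe v

variable {V : Type v} {X : Type*} [MetricSpace X] (S : GraphDirectedSystem V X) {t : ℝ}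

/-- The heads of the edges leaving `u`. -/
abbrev Successor (u : V) : Type v := {v // S.Edge u v}

/-- The matrix `A^t` of the construction, with entries `ratio u v ^ t` on the edges. -/
noncomputable def weightMatrix (t : ℝ) : Matrix V V ℝ :=
  .of fun u v => if S.Edge u v then (S.ratio u v : ℝ) ^ t else 0

/-- The family `C` of nonempty compact sets is the attractor of `S`. -/
structure IsAttractor (C : V → Set X) : Prop where
  nonempty : ∀ u, (C u).Nonempty
  isCompact : ∀ u, IsCompact (C u)
  eq_iUnion : ∀ u, C u = ⋃ v : S.Successor u, S.map u v '' C v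

/-- The strong separation condition: distinct edges leaving a vertex give disjoint pieces. -/
def IsStronglySeparated (C : V → Set X) : Prop :=
  ∀ u, Pairwise fun v v' : S.Successor u => Disjoint (S.map u v '' C v) (S.map u v' '' C v')

/-- Directed paths with `k` edges starting at `u`, which index the cylinders of level `k`. -/
def Word : ℕ → V → Type v
  | 0, _ => PUnit
  | k + 1, u => Σ v : S.Successor u, Word k v

/-- The cylinder of a path: the copy, under the composed edge maps, of the component of `C` at the
end of the path. -/
def cylinder (C : V → Set X) : ∀ k u, S.Word k u → Set X
  | 0, u, _ => C u
  | k + 1, u, ⟨v, w⟩ => S.map u v '' cylinder C k v w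

noncomputable instance instFintypeWord [Fintype V] : ∀ k u, Fintype (S.Word k u)
  | 0, _ => inferInstanceAs (Fintype PUnit)
  | k + 1, u =>
    have (v : S.Successor u) := instFintypeWord k v.1
    inferInstanceAs (Fintype (Σ v : S.Successor u, S.Word k v))

variable {S} {C : V → Set X}

theorem lipschitzWith_map {u v : V} (h : S.Edge u v) : LipschitzWith (S.ratio u v) (S.map u v) :=
  fun x y => (S.edist_map h x y).le

theorem exists_ratio_le [Finite V] (S : GraphDirectedSystem V X) :
    ∃ q : ℝ≥0, q < 1 ∧ ∀ u v, S.Edge u v → S.ratio u v ≤ q := by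
  have hnear : ∀ᶠ q : ℝ≥0 in 𝓝[<] 1, ∀ u v, S.Edge u v → S.ratio u v ≤ q :=
    eventually_all.2 fun u => eventually_all.2 fun v => eventually_imp_distrib_left.2 fun h =>
      nhdsWithin_le_nhds (eventually_ge_nhds (S.ratio_lt_one h))
  have := nhdsLT_neBot_of_exists_lt (b := (1 : ℝ≥0)) ⟨0, one_pos⟩
  obtain ⟨q, hq, hq₁⟩ := (hnear.and self_mem_nhdsWithin).exists
  exact ⟨q, hq₁, hq⟩

theorem IsAttractor.subset_of_mapsTo [Finite V] (hC : S.IsAttractor C) {J : V → Set X}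
    (hne : ∀ u, (J u).Nonempty) (hclosed : ∀ u, IsClosed (J u))
    (hinv : ∀ u v, S.Edge u v → MapsTo (S.map u v) (J v) (J u)) (u : V) : C u ⊆ J u := by
  obtain ⟨q, hq₁, hq⟩ := S.exists_ratio_le
  choose j hj using hne
  obtain ⟨D, hD⟩ := exists_forall_ediam_le fun u => ((hC.isCompact u).insert (j u)).isBounded
  have happrox (k : ℕ) (u : V) : ∀ x ∈ C u, ∃ z ∈ J u, edist x z ≤ (q : ℝ≥0∞) ^ k * D := by
    induction k generalizing u with
    | zero =>
      intro x hx
      refine ⟨j u, hj u, ?_⟩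
      simpa using (Metric.edist_le_ediam_of_mem (mem_insert_of_mem _ hx)
        (mem_insert _ _)).trans (hD u)
    | succ k ih =>
      intro x hx
      rw [hC.eq_iUnion u] at hx
      obtain ⟨v, x', hx', rfl⟩ := mem_iUnion.1 hx
      obtain ⟨z, hz, hxz⟩ := ih v x' hx'
      refine ⟨S.map u v z, hinv u v v.2 hz, ?_⟩
      rw [S.edist_map v.2, pow_succ', mul_assoc]
      gcongr
      exact hq u v v.2
  intro x hx
  refine (hclosed u).closure_subset (Metric.mem_closure_iff_infEDist_zero.2 ?_)
  refine le_antisymm (ge_of_tendsto' (tendsto_pow_mul_atTop_nhds_zero hq₁ D) fun k => ?_) zero_le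
  obtain ⟨z, hz, hxz⟩ := happrox k u x hx
  exact (Metric.infEDist_le_edist_of_mem hz).trans hxz

section Weights

theorem weightMatrix_nonneg (u v : V) : 0 ≤ S.weightMatrix t u v := by
  simp only [weightMatrix, of_apply]
  positivity

theorem weightMatrix_pos_of_edge {u v : V} (h : S.Edge u v) : 0 < S.weightMatrix t u v := by
  simp only [weightMatrix, of_apply, if_pos h]
  exact Real.rpow_pos_of_pos (S.ratio_pos h) t

theorem IsAttractor.exists_edge (hC : S.IsAttractor C) (u : V) : ∃ v, S.Edge u v := by
  obtain ⟨x, hx⟩ := hC.nonempty u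
  rw [hC.eq_iUnion u] at hx
  obtain ⟨v, -⟩ := mem_iUnion.1 hx
  exact ⟨v, v.2⟩

theorem IsAttractor.isIrreducible_weightMatrix (hC : S.IsAttractor C)
    (hconn : ∀ u v, Relation.ReflTransGen S.Edge u v) : (S.weightMatrix t).IsIrreducible := by
  refine isIrreducible_of_transGen weightMatrix_nonneg fun u v => ?_
  obtain ⟨w, huw⟩ := hC.exists_edge u
  exact Relation.TransGen.mono (fun _ _ => weightMatrix_pos_of_edge) _ _
    (Relation.TransGen.head' huw (hconn w v))

theorem weightMatrix_mulVec [Fintype V] (y : V → ℝ) (u : V) :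
    (S.weightMatrix t *ᵥ y) u = ∑ v : S.Successor u, (S.ratio u v : ℝ) ^ t * y v := by
  simp only [mulVec, dotProduct, weightMatrix, of_apply, ite_mul, zero_mul]
  rw [← sum_filter, ← Finset.sum_subtype_eq_sum_filter, Finset.subtype_univ]

theorem sum_ratio_rpow_mul_const_mul [Fintype V] (ht : 0 ≤ t) (y : V → ℝ≥0) (c : ℝ≥0∞) (u : V) :
    ∑ v : S.Successor u, (S.ratio u v : ℝ≥0∞) ^ t * (c * y v) =
      c * ↑(∑ v : S.Successor u, S.ratio u v ^ t * y v) := by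
  push_cast
  simp only [mul_sum, ENNReal.coe_rpow_of_nonneg _ ht, mul_left_comm]

theorem exists_weight [Fintype V] [DecidableEq V] [Nonempty V]
    (hirr : (S.weightMatrix t).IsIrreducible)
    (hspec : spectralRadius ℂ ((S.weightMatrix t).map ((↑) : ℝ → ℂ)) = 1) :
    ∃ y : V → ℝ≥0, (∀ u, 0 < y u) ∧
      ∀ u, ∑ v : S.Successor u, S.ratio u v ^ t * y v = y u := by
  obtain ⟨y, hy, hAy⟩ := exists_pos_mulVec_eq_smul hirr (ρ := 1) hspec
  lift y to V → ℝ≥0 using fun u => (hy u).le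
  refine ⟨y, hy, fun u => NNReal.eq ?_⟩
  simpa [weightMatrix_mulVec] using congrFun hAy u

end Weights

section UpperBound

theorem IsAttractor.subset_iUnion_cylinder (hC : S.IsAttractor C) (k : ℕ) (u : V) :
    C u ⊆ ⋃ w, S.cylinder C k u w := by
  induction k generalizing u with
  | zero => exact fun x hx => mem_iUnion.2 ⟨PUnit.unit, hx⟩
  | succ k ih =>
    intro x hx
    rw [hC.eq_iUnion u] at hx
    obtain ⟨v, x', hx', rfl⟩ := mem_iUnion.1 hx
    obtain ⟨w, hw⟩ := mem_iUnion.1 (ih v hx')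
    exact mem_iUnion.2 ⟨⟨v, w⟩, mem_image_of_mem _ hw⟩

theorem ediam_cylinder_succ_le {k : ℕ} {u : V} (v : S.Successor u) (w : S.Word k v) :
    Metric.ediam (S.cylinder C (k + 1) u ⟨v, w⟩) ≤
      S.ratio u v * Metric.ediam (S.cylinder C k v w) :=
  (lipschitzWith_map v.2).ediam_image_le _

theorem ediam_cylinder_le {q D : ℝ≥0} (hq : ∀ u v, S.Edge u v → S.ratio u v ≤ q)
    (hD : ∀ u, Metric.ediam (C u) ≤ D) (k : ℕ) (u : V) (w : S.Word k u) :
    Metric.ediam (S.cylinder C k u w) ≤ q ^ k * D := by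
  induction k generalizing u with
  | zero => simpa [cylinder] using hD u
  | succ k ih =>
    obtain ⟨v, w⟩ := w
    calc Metric.ediam (S.cylinder C (k + 1) u ⟨v, w⟩)
        ≤ S.ratio u v * Metric.ediam (S.cylinder C k v w) := ediam_cylinder_succ_le v w
      _ ≤ q * (q ^ k * D) := by
        gcongr
        exacts [hq u v v.2, ih v w]
      _ = q ^ (k + 1) * D := by ring

theorem sum_ediam_cylinder_rpow_le [Fintype V] (ht : 0 ≤ t) {y : V → ℝ≥0} {M : ℝ≥0∞}
    (hy : ∀ u, ∑ v : S.Successor u, S.ratio u v ^ t * y v ≤ y u)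
    (hM : ∀ u, Metric.ediam (C u) ^ t ≤ M * y u) (k : ℕ) (u : V) :
    ∑ w, Metric.ediam (S.cylinder C k u w) ^ t ≤ M * y u := by
  induction k generalizing u with
  | zero => exact (Fintype.sum_unique (ι := PUnit) _).trans_le (hM u)
  | succ k ih =>
    calc ∑ w, Metric.ediam (S.cylinder C (k + 1) u w) ^ t
        = ∑ v : S.Successor u, ∑ w, Metric.ediam (S.cylinder C (k + 1) u ⟨v, w⟩) ^ t :=
        Fintype.sum_sigma _
      _ ≤ ∑ v : S.Successor u, ∑ w, (S.ratio u v * Metric.ediam (S.cylinder C k v w)) ^ t := by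
        gcongr with v _ w
        exact ediam_cylinder_succ_le v w
      _ = ∑ v : S.Successor u, (S.ratio u v : ℝ≥0∞) ^ t *
          ∑ w : S.Word k v, Metric.ediam (S.cylinder C k v w) ^ t := by
        simp only [ENNReal.mul_rpow_of_nonneg _ _ ht, mul_sum]
      _ ≤ ∑ v : S.Successor u, (S.ratio u v : ℝ≥0∞) ^ t * (M * y v) := by
        gcongr with v
        exact ih v
      _ = M * ↑(∑ v : S.Successor u, S.ratio u v ^ t * y v) :=
        sum_ratio_rpow_mul_const_mul ht y M u
      _ ≤ M * y u := by
        gcongr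
        exact hy u

theorem IsAttractor.hausdorffMeasure_ne_top [Fintype V] [MeasurableSpace X] [BorelSpace X]
    (hC : S.IsAttractor C) (ht : 0 ≤ t) {y : V → ℝ≥0} (hy₀ : ∀ u, 0 < y u)
    (hy : ∀ u, ∑ v : S.Successor u, S.ratio u v ^ t * y v ≤ y u) (u : V) :
    μH[t] (C u) ≠ ⊤ := by
  obtain ⟨q, hq₁, hq⟩ := S.exists_ratio_le
  obtain ⟨D, hD⟩ := exists_forall_ediam_le fun u => (hC.isCompact u).isBounded
  obtain ⟨m, hm, hmy⟩ := exists_pos_forall_le hy₀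
  have hm₀ : (m : ℝ≥0∞) ≠ 0 := ENNReal.coe_ne_zero.2 hm.ne'
  set M : ℝ≥0∞ := (D : ℝ≥0∞) ^ t / m
  have hM (u : V) : Metric.ediam (C u) ^ t ≤ M * y u := by
    calc Metric.ediam (C u) ^ t ≤ (D : ℝ≥0∞) ^ t := ENNReal.rpow_le_rpow (hD u) ht
      _ = M * m := (ENNReal.div_mul_cancel hm₀ ENNReal.coe_ne_top).symm
      _ ≤ M * y u := by
        gcongr
        exact hmy u
  have hM_ne_top : M ≠ ⊤ :=
    ENNReal.div_ne_top (ENNReal.rpow_ne_top_of_nonneg ht ENNReal.coe_ne_top) hm₀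
  refine ne_top_of_le_ne_top (ENNReal.mul_ne_top hM_ne_top (ENNReal.coe_ne_top (r := y u))) ?_
  calc μH[t] (C u) ≤ liminf (fun k => ∑ w, Metric.ediam (S.cylinder C k u w) ^ t) atTop :=
        Measure.hausdorffMeasure_le_liminf_sum t _ _
          (tendsto_pow_mul_atTop_nhds_zero hq₁ D) _
          (.of_forall fun k w => ediam_cylinder_le hq hD k u w)
          (.of_forall fun k => hC.subset_iUnion_cylinder k u)
    _ ≤ liminf (fun _ : ℕ => M * y u) atTop :=
        liminf_le_liminf (.of_forall fun k => sum_ediam_cylinder_rpow_le ht hy hM k u)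
    _ = M * y u := liminf_const _

end UpperBound

section LowerBound

theorem IsAttractor.exists_pos_le_edist [Finite V] (hC : S.IsAttractor C)
    (hsep : S.IsStronglySeparated C) :
    ∃ g : ℝ≥0, 0 < g ∧ ∀ u (v v' : S.Successor u), v ≠ v' →
      ∀ x ∈ S.map u v '' C v, ∀ y ∈ S.map u v' '' C v', g ≤ edist x y := by
  have hcompact (u : V) (v : S.Successor u) : IsCompact (S.map u v '' C v) :=
    (hC.isCompact v).image (lipschitzWith_map v.2).continuous
  have hgap (i : Σ u, {p : S.Successor u × S.Successor u // p.1 ≠ p.2}) :=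
    Metric.exists_pos_forall_lt_edist (hcompact i.1 i.2.1.1) (hcompact i.1 i.2.1.2).isClosed
      (hsep i.1 i.2.2)
  choose r hr hlt using hgap
  obtain ⟨g, hg, hle⟩ := exists_pos_forall_le hr
  exact ⟨g, hg, fun u v v' hne x hx y hy =>
    (ENNReal.coe_le_coe.2 (hle _)).trans (hlt ⟨u, (v, v'), hne⟩ x hx y hy).le⟩

-- A cover either contains a set as wide as the gap `g` between the pieces of `C u`, which is
-- expensive enough by itself, or splits into covers of the separate pieces.
theorem IsAttractor.mul_le_truncatedContent [Fintype V] (hC : S.IsAttractor C) (ht : 0 ≤ t)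
    {y : V → ℝ≥0} (hy : ∀ u, y u ≤ ∑ v : S.Successor u, S.ratio u v ^ t * y v)
    {q g : ℝ≥0} (hq : ∀ u v, S.Edge u v → S.ratio u v ≤ q)
    (hg : ∀ u (v v' : S.Successor u), v ≠ v' →
      ∀ x ∈ S.map u v '' C v, ∀ y ∈ S.map u v' '' C v', g ≤ edist x y)
    {c : ℝ≥0∞} (hc : ∀ u, c * y u ≤ (g : ℝ≥0∞) ^ t) (k : ℕ) (u : V) :
    c * y u ≤ truncatedContent t (q ^ k * g) (C u) := by
  induction k generalizing u with
  | zero => simpa using (hc u).trans (rpow_le_truncatedContent ht (hC.nonempty u))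
  | succ k ih =>
    have hpiece (v : S.Successor u) : (S.ratio u v : ℝ≥0∞) ^ t * (c * y v) ≤
        truncatedContent t (q ^ (k + 1) * g) (S.map u v '' C v) := by
      calc (S.ratio u v : ℝ≥0∞) ^ t * (c * y v)
          ≤ (S.ratio u v : ℝ≥0∞) ^ t * truncatedContent t (q ^ k * g) (C v) := by
            gcongr
            exact ih v
        _ ≤ truncatedContent t (S.ratio u v * (q ^ k * g)) (S.map u v '' C v) :=
            rpow_mul_truncatedContent_le_image ht fun x y => (S.edist_map v.2 x y).ge
        _ ≤ truncatedContent t (q ^ (k + 1) * g) (S.map u v '' C v) := by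
            refine truncatedContent_mono ht ?_
            rw [pow_succ', mul_assoc]
            gcongr
            exact hq u v v.2
    have hsum : c * y u ≤ ∑ v : S.Successor u, (S.ratio u v : ℝ≥0∞) ^ t * (c * y v) := by
      calc c * y u ≤ c * ↑(∑ v : S.Successor u, S.ratio u v ^ t * y v) := by
            gcongr
            exact hy u
        _ = ∑ v : S.Successor u, (S.ratio u v : ℝ≥0∞) ^ t * (c * y v) :=
            (sum_ratio_rpow_mul_const_mul ht y c u).symm
    calc c * y u
        ≤ min ((g : ℝ≥0∞) ^ t)
            (∑ v : S.Successor u, truncatedContent t (q ^ (k + 1) * g) (S.map u v '' C v)) :=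
          le_min (hc u) (hsum.trans (sum_le_sum fun v _ => hpiece v))
      _ ≤ truncatedContent t (q ^ (k + 1) * g) (⋃ v : S.Successor u, S.map u v '' C v) :=
          min_sum_le_truncatedContent_iUnion ht (hg u)
      _ = truncatedContent t (q ^ (k + 1) * g) (C u) := by rw [← hC.eq_iUnion u]

theorem IsAttractor.hausdorffMeasure_ne_zero [Fintype V] [MeasurableSpace X] [BorelSpace X]
    (hC : S.IsAttractor C) (hsep : S.IsStronglySeparated C)
    (ht : 0 ≤ t) {y : V → ℝ≥0} (hy₀ : ∀ u, 0 < y u)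
    (hy : ∀ u, y u ≤ ∑ v : S.Successor u, S.ratio u v ^ t * y v) (u : V) :
    μH[t] (C u) ≠ 0 := by
  obtain ⟨q, hq₁, hq⟩ := S.exists_ratio_le
  obtain ⟨g, hg₀, hg⟩ := hC.exists_pos_le_edist hsep
  obtain ⟨M, hM⟩ := Finite.exists_le y
  set c : ℝ≥0∞ := (g : ℝ≥0∞) ^ t / M
  have hc₀ : c ≠ 0 :=
    ENNReal.div_ne_zero.2 ⟨(ENNReal.rpow_pos (by exact_mod_cast hg₀) ENNReal.coe_ne_top).ne',
      ENNReal.coe_ne_top⟩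
  have hc (u : V) : c * y u ≤ (g : ℝ≥0∞) ^ t :=
    (mul_le_mul_right (ENNReal.coe_le_coe.2 (hM u)) c).trans (ENNReal.mul_le_of_le_div le_rfl)
  have hle : c * y u ≤ μH[t] (C u) := by
    refine le_hausdorffMeasure_of_le_truncatedContent (hC.isCompact u) ht fun δ hδ => ?_
    obtain ⟨k, hk⟩ := NNReal.exists_pow_lt_of_lt_one (div_pos hδ hg₀) hq₁
    have hscale : (q : ℝ≥0∞) ^ k * g ≤ δ := by
      exact_mod_cast ((lt_div_iff₀ hg₀).1 hk).le
    exact (hC.mul_le_truncatedContent ht hy hq hg hc k u).trans (truncatedContent_mono ht hscale)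
  exact (lt_of_lt_of_le (ENNReal.mul_pos hc₀ (by exact_mod_cast (hy₀ u).ne')) hle).ne'

end LowerBound

section Affine

variable {E : V → V → Prop} {r a : V → V → ℝ}

/-- The system of affine maps `x ↦ r u v * x + a u v` of the real line along the edges of `E`. -/
noncomputable def affine (E : V → V → Prop) (r a : V → V → ℝ)
    (hr : ∀ u v, E u v → 0 < r u v ∧ r u v < 1) : GraphDirectedSystem V ℝ where
  Edge := E
  ratio u v := (r u v).toNNReal
  map u v x := r u v * x + a u v
  ratio_pos h := Real.toNNReal_pos.2 (hr _ _ h).1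
  ratio_lt_one h := Real.toNNReal_lt_one.2 (hr _ _ h).2
  edist_map {u v} h x y := by
    rw [edist_add_right, edist_dist, edist_dist, Real.dist_eq, Real.dist_eq, ← mul_sub, abs_mul,
      abs_of_pos (hr u v h).1, ENNReal.ofReal_mul (hr u v h).1.le, ENNReal.ofReal]

theorem map_weightMatrix_affine (hr : ∀ u v, E u v → 0 < r u v ∧ r u v < 1) :
    ((affine E r a hr).weightMatrix t).map ((↑) : ℝ → ℂ) =
      Matrix.of fun u v => if E u v then ((r u v ^ t : ℝ) : ℂ) else 0 := by
  ext u v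
  by_cases h : E u v <;> simp [weightMatrix, affine, h, (hr u v _).1.le]

end Affine

end GraphDirectedSystem

theorem stmt11_general {V X : Type*} [Fintype V] [DecidableEq V] [MetricSpace X]
    {S : GraphDirectedSystem V X} {C : V → Set X} (hC : S.IsAttractor C)
    (hconn : ∀ u v, Relation.ReflTransGen S.Edge u v) (hsep : S.IsStronglySeparated C)
    {t : ℝ} (ht : 0 ≤ t)
    (hspec : spectralRadius ℂ ((S.weightMatrix t).map ((↑) : ℝ → ℂ)) = 1) :
    dimH (⋃ u, C u) = ENNReal.ofReal t := by
  borelize X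
  have : Nonempty V := not_isEmpty_iff.1 fun _ => by
    simp [spectrum.SpectralRadius.of_subsingleton] at hspec
  obtain ⟨y, hy₀, hy⟩ := S.exists_weight (hC.isIrreducible_weightMatrix hconn) hspec
  have hdim (u : V) : dimH (C u) = ENNReal.ofReal t := by
    apply dimH_of_hausdorffMeasure_ne_zero_ne_top <;> rw [Real.coe_toNNReal t ht]
    · exact hC.hausdorffMeasure_ne_zero hsep ht hy₀ (fun u => (hy u).ge) u
    · exact hC.hausdorffMeasure_ne_top ht hy₀ (fun u => (hy u).le) u
  simp only [dimH_iUnion, hdim, iSup_const]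

/-- for a graph-directed construction with strongly connected graph, if
`t₀ ≥ 0` is such that the spectral radius of the weighted incidence matrix `A^{t₀}`
equals `1`, then the Hausdorff dimension of `K* = ⋃_u C_u` equals `t₀`. -/
theorem stmt11 (n : ℕ) (hn : 1 ≤ n)
    (E : Fin n → Fin n → Prop) (hE : ∀ u, ∃ v, E u v)
    (r a : Fin n → Fin n → ℝ)
    (hr : ∀ u v, E u v → 0 < r u v ∧ r u v < 1)
    (f : Fin n → Fin n → ℝ → ℝ) (hf : ∀ u v x, f u v x = r u v * x + a u v)
    -- the pairwise disjoint nonempty bounded closed intervals `J_u`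
    (c d : Fin n → ℝ) (hJne : ∀ u, c u ≤ d u)
    (hJdisj : ∀ u v, u ≠ v → Disjoint (Icc (c u) (d u)) (Icc (c v) (d v)))
    (hinv : ∀ u, (⋃ (v : Fin n) (_ : E u v), f u v '' Icc (c v) (d v)) ⊆ Icc (c u) (d u))
    (hsep : ∀ u v v', E u v → E u v' → v ≠ v' →
      Disjoint (f u v '' Icc (c v) (d v)) (f u v' '' Icc (c v') (d v')))
    -- the attractor `(C_1,…,C_n)`
    (C : Fin n → Set ℝ)
    (hC : ∀ u, (C u).Nonempty ∧ IsCompact (C u))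
    (hCattr : ∀ u, C u = ⋃ (v : Fin n) (_ : E u v), f u v '' C v)
    -- the graph is strongly connected
    (hconn : ∀ u v : Fin n, Relation.ReflTransGen E u v)
    -- `t₀ ≥ 0` with spectral radius of `A^{t₀}` equal to `1`
    (t₀ : ℝ) (ht₀ : 0 ≤ t₀)
    (hspec : spectralRadius ℂ
      (Matrix.of fun u v : Fin n => if E u v then ((r u v ^ t₀ : ℝ) : ℂ) else 0) = 1) :
    dimH (⋃ u, C u) = ENNReal.ofReal t₀ := by
  obtain rfl : f = fun u v x => r u v * x + a u v := funext₃ hf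
  have hS : (GraphDirectedSystem.affine E r a hr).IsAttractor C :=
    ⟨fun u => (hC u).1, fun u => (hC u).2, fun u => by
      rw [iUnion_subtype]
      exact hCattr u⟩
  have hCJ : ∀ u, C u ⊆ Icc (c u) (d u) :=
    hS.subset_of_mapsTo (fun u => nonempty_Icc.2 (hJne u)) (fun _ => isClosed_Icc)
      fun u v h => mapsTo_iff_image_subset.2 ((subset_iUnion₂ v h).trans (hinv u))
  refine stmt11_general hS hconn (fun u v v' hne => ?_) ht₀ ?_
  · exact (hsep u v v' v.2 v'.2 (Subtype.coe_ne_coe.2 hne)).mono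
      (image_mono (hCJ v)) (image_mono (hCJ v'))
  · rwa [GraphDirectedSystem.map_weightMatrix_affine]
end

section
/- Consider a graph-directed construction (with graph G not necessarily strongly connected). Call a nonempty subset S ⊆ V strongly connected if for all u, v ∈ S there is a directed path from u to v using only vertices of S. Then the Hausdorff dimension of K* = ⋃_{u=1}^n C_u equals the supremum of the set {t ≥ 0 : there exists a strongly connected S ⊆ V such that the spectral radius of the submatrix of A^t indexed by S × S equals 1}. -/
open Set
open scoped Classical

/-!
A nonzero vector `x ≥ 0` with `x ≤ A ^ t x` certifies that the spectral radius of `A ^ t` is at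
least `1`. Let `t₀` be the largest exponent admitting such a certificate. A certificate with minimal
support lives on a strongly connected vertex set, and the spectral radius of that block at `t₀` is
exactly `1`, since otherwise continuity in `t` would produce a certificate at a larger exponent.

For `t > t₀` the spectral radius of `A ^ t` is less than `1`, so the coverings of the attractor by
its level-`k` pieces have total `t`-weight tending to `0`. For `t = t₀` the certificate allows one
to subdivide an interval of length `x u` into pieces similar to the intervals of length `x v`, with
ratios `r u v ^ t`, along the edges `(u, v)`. This self-similar subdivision assigns to the points of
the interval points of `C u`, and magnifying two points until they fall into different pieces shows
that the inverse assignment is Hölder continuous of exponent `t`, whence `dimH (C u) ≥ t`.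
-/

open Filter Topology MeasureTheory
open scoped NNReal ENNReal Matrix

theorem tendsto_pow_zero_of_spectralRadius_lt_one {A : Type*} [NormedRing A] [NormedAlgebra ℂ A]
    [CompleteSpace A] {a : A} (ha : spectralRadius ℂ a < 1) :
    Tendsto (fun k : ℕ => a ^ k) atTop (𝓝 0) := by
  obtain ⟨q, haq, hq⟩ := ENNReal.lt_iff_exists_nnreal_btwn.1 ha
  have hroot := (spectrum.pow_nnnorm_pow_one_div_tendsto_nhds_spectralRadius a).eventually_lt_const
    haq
  refine squeeze_zero_norm' ?_ (tendsto_pow_atTop_nhds_zero_of_lt_one q.2 (mod_cast hq))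
  filter_upwards [hroot, eventually_ne_atTop 0] with k hk hk0
  have hpow : (‖a ^ k‖₊ : ℝ≥0∞) ≤ (q : ℝ≥0∞) ^ k := by
    rw [← ENNReal.rpow_natCast, ← ENNReal.rpow_inv_le_iff (by positivity), ← one_div]
    exact hk.le
  exact_mod_cast hpow

theorem exists_offset_of_lt_sum {ι : Type*} (s : Finset ι) (w : ι → ℝ) :
    ∃ off : ι → ℝ, ∀ z, 0 ≤ z → z < ∑ i ∈ s, w i → ∃ i ∈ s, off i ≤ z ∧ z < off i + w i := by
  induction s using Finset.induction_on with
  | empty => exact ⟨0, fun z hz0 hz => absurd hz (by rwa [Finset.sum_empty, not_lt])⟩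
  | insert i s hi ih =>
    obtain ⟨off, hoff⟩ := ih
    refine ⟨Function.update off i (∑ j ∈ s, w j), fun z hz0 hz => ?_⟩
    rw [Finset.sum_insert hi, add_comm] at hz
    rcases lt_or_ge z (∑ j ∈ s, w j) with hzs | hzs
    · obtain ⟨j, hj, hzj⟩ := hoff z hz0 hzs
      have hji : j ≠ i := ne_of_mem_of_not_mem hj hi
      exact ⟨j, Finset.mem_insert_of_mem hj, by rwa [Function.update_of_ne hji]⟩
    · exact ⟨i, Finset.mem_insert_self i s, by rw [Function.update_self]; exact ⟨hzs, hz⟩⟩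

section NonnegativeMatrix

variable {ι : Type*} [Fintype ι] {B : Matrix ι ι ℝ} {c : ℝ}

/-- A Collatz–Wielandt certificate that the Perron root of the nonnegative matrix `B` is at least
`c`: a nonzero nonnegative vector that `B` multiplies by at least `c` in every coordinate. -/
def HasGrowthVector (B : Matrix ι ι ℝ) (c : ℝ) : Prop :=
  ∃ x : ι → ℝ, 0 ≤ x ∧ x ≠ 0 ∧ c • x ≤ B *ᵥ x

theorem mulVec_le_mulVec_of_nonneg (hB : ∀ i j, 0 ≤ B i j) {x y : ι → ℝ} (hxy : x ≤ y) :
    B *ᵥ x ≤ B *ᵥ y := fun i =>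
  Finset.sum_le_sum fun j _ => mul_le_mul_of_nonneg_left (hxy j) (hB i j)

theorem HasGrowthVector.mono {c' : ℝ} (h : HasGrowthVector B c) (hc : c' ≤ c) :
    HasGrowthVector B c' := by
  obtain ⟨x, hx0, hx, hcx⟩ := h
  exact ⟨x, hx0, hx, (smul_le_smul_of_nonneg_right hc hx0).trans hcx⟩

theorem HasGrowthVector.exists_mem_stdSimplex (h : HasGrowthVector B c) :
    ∃ x ∈ stdSimplex ℝ ι, c • x ≤ B *ᵥ x := by
  obtain ⟨x, hx0, hx, hcx⟩ := h
  have hsum : 0 < ∑ i, x i := Fintype.sum_pos (hx0.lt_of_ne' hx)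
  refine ⟨(∑ i, x i)⁻¹ • x, ⟨fun i => mul_nonneg (inv_nonneg.2 hsum.le) (hx0 i), ?_⟩, ?_⟩
  · simp only [Pi.smul_apply, smul_eq_mul, ← Finset.mul_sum, inv_mul_cancel₀ hsum.ne']
  · rw [Matrix.mulVec_smul, smul_comm]
    exact smul_le_smul_of_nonneg_left hcx (inv_nonneg.2 hsum.le)

theorem hasGrowthVector_of_mem_stdSimplex {x : ι → ℝ} (hx : x ∈ stdSimplex ℝ ι)
    (hcx : c • x ≤ B *ᵥ x) : HasGrowthVector B c :=
  ⟨x, hx.1, fun h => by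
    simpa only [h, Pi.zero_apply, Finset.sum_const_zero, zero_ne_one] using hx.2, hcx⟩

theorem HasGrowthVector.le_card_mul {b : ℝ} (h : HasGrowthVector B c) (hb : 0 ≤ b)
    (hB : ∀ i j, B i j ≤ b) : c ≤ Fintype.card ι * b := by
  obtain ⟨x, hx0, hx, hcx⟩ := h
  obtain ⟨i₀, hi₀⟩ := Function.ne_iff.1 hx
  have : Nonempty ι := ⟨i₀⟩
  obtain ⟨i, hi⟩ := Finite.exists_max x
  have hxi : 0 < x i := ((hx0 i₀).lt_of_ne' hi₀).trans_le (hi i₀)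
  refine le_of_mul_le_mul_right ?_ hxi
  calc c * x i ≤ ∑ j, B i j * x j := hcx i
    _ ≤ ∑ _j : ι, b * x i :=
      Finset.sum_le_sum fun j _ => mul_le_mul (hB i j) (hi j) (hx0 j) hb
    _ = Fintype.card ι * b * x i := by
      rw [Finset.sum_const, Finset.card_univ, nsmul_eq_mul, mul_assoc]

theorem HasGrowthVector.of_submatrix {κ : Type*} [Fintype κ] {e : κ → ι}
    (he : Function.Injective e) (hB : ∀ i j, 0 ≤ B i j) (h : HasGrowthVector (B.submatrix e e) c) :
    HasGrowthVector B c := by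
  obtain ⟨x, hx0, hx, hcx⟩ := h
  let y : ι → ℝ := Function.extend e x 0
  have hy (k : κ) : y (e k) = x k := he.extend_apply x _ k
  have hy' (i : ι) (hi : i ∉ range e) : y i = 0 := Function.extend_apply' x _ i hi
  have hy0 : 0 ≤ y := fun i => by
    by_cases hi : i ∈ range e
    · obtain ⟨k, rfl⟩ := hi
      exact (hx0 k).trans_eq (hy k).symm
    · exact (hy' i hi).ge
  refine ⟨y, hy0, fun h0 => hx (funext fun k => ?_), fun i => ?_⟩
  · rw [← hy k, h0, Pi.zero_apply, Pi.zero_apply]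
  by_cases hi : i ∈ range e
  · obtain ⟨k, rfl⟩ := hi
    calc c * y (e k) = c * x k := by rw [hy]
      _ ≤ ∑ l, B (e k) (e l) * x l := hcx k
      _ = ∑ j, B (e k) j * y j :=
        Fintype.sum_of_injective e he _ _ (fun j hj => by rw [hy' j hj, mul_zero])
          fun l => by rw [hy]
  · rw [Pi.smul_apply, hy' i hi, smul_zero]
    exact Finset.sum_nonneg fun j _ => mul_nonneg (hB i j) (hy0 j)

theorem exists_subdivision (hB : ∀ u v, 0 ≤ B u v) {x : ι → ℝ} (hx : x ≤ B *ᵥ x) :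
    ∃ off : ι → ι → ℝ, ∀ u, ∀ z ∈ Ico 0 (x u), ∃ v, 0 < B u v ∧
      ∃ w ∈ Ico 0 (x v), z = off u v + B u v * w := by
  choose off hoff using fun u => exists_offset_of_lt_sum Finset.univ fun v => B u v * x v
  refine ⟨off, fun u z hz => ?_⟩
  obtain ⟨v, -, hle, hlt⟩ := hoff u z hz.1 (hz.2.trans_le (hx u))
  rw [← sub_lt_iff_lt_add'] at hlt
  have hBuv : 0 < B u v := (hB u v).lt_of_ne' fun h0 => by
    rw [h0, zero_mul] at hlt
    exact hlt.not_ge (sub_nonneg.2 hle)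
  refine ⟨v, hBuv, (z - off u v) / B u v, ⟨div_nonneg (sub_nonneg.2 hle) hBuv.le, ?_⟩, ?_⟩
  · rwa [div_lt_iff₀' hBuv]
  · rw [mul_div_cancel₀ _ hBuv.ne', add_sub_cancel]

section SpectralRadius

variable [DecidableEq ι]

theorem hasGrowthVector_norm_of_mem_spectrum (hB : ∀ i j, 0 ≤ B i j) {z : ℂ}
    (hz : z ∈ spectrum ℂ (B.map Complex.ofReal)) : HasGrowthVector B ‖z‖ := by
  rw [← Matrix.spectrum_toLin', ← Module.End.hasEigenvalue_iff_mem_spectrum] at hz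
  obtain ⟨w, hw⟩ := hz.exists_hasEigenvector
  refine ⟨fun i => ‖w i‖, fun i => norm_nonneg _, fun h => hw.2 ?_, fun i => ?_⟩
  · exact funext fun i => norm_eq_zero.1 (congrFun h i)
  · have hi : ∑ j, (B i j : ℂ) * w j = z * w i := congrFun hw.apply_eq_smul i
    calc ‖z‖ * ‖w i‖ = ‖∑ j, (B i j : ℂ) * w j‖ := by rw [← norm_mul, hi]
      _ ≤ ∑ j, ‖(B i j : ℂ) * w j‖ := norm_sum_le _ _
      _ = ∑ j, B i j * ‖w j‖ := Finset.sum_congr rfl fun j _ => by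
        rw [norm_mul, Complex.norm_of_nonneg (hB i j)]

attribute [local instance] Matrix.linftyOpNormedRing Matrix.linftyOpNormedAlgebra

theorem hasGrowthVector_of_ofReal_le_spectralRadius (hB : ∀ i j, 0 ≤ B i j) (hc : 0 < c)
    (h : ENNReal.ofReal c ≤ spectralRadius ℂ (B.map Complex.ofReal)) : HasGrowthVector B c := by
  have hne : (spectrum ℂ (B.map Complex.ofReal)).Nonempty := by
    by_contra! hempty
    refine (ENNReal.ofReal_pos.2 hc).not_ge (h.trans_eq ?_)
    simp [spectralRadius, hempty]
  obtain ⟨z, hz, hzr⟩ := spectrum.exists_nnnorm_eq_spectralRadius_of_nonempty hne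
  refine (hasGrowthVector_norm_of_mem_spectrum hB hz).mono ?_
  rwa [← hzr, ← enorm_eq_nnnorm, ← ofReal_norm, ENNReal.ofReal_le_ofReal_iff (norm_nonneg z)] at h

theorem tendsto_pow_mulVec_of_spectralRadius_lt_one
    (h : spectralRadius ℂ (B.map Complex.ofReal) < 1) (y : ι → ℝ) :
    Tendsto (fun k : ℕ => B ^ k *ᵥ y) atTop (𝓝 0) := by
  have hpow (k : ℕ) : ((B.map Complex.ofReal) ^ k).map Complex.re = B ^ k := by
    rw [show B.map Complex.ofReal ^ k = (B ^ k).map Complex.ofReal from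
      (Matrix.map_pow B Complex.ofRealHom k).symm]
    exact Matrix.ext fun i j => Complex.ofReal_re _
  have hcont : Continuous fun M : Matrix ι ι ℂ => M.map Complex.re *ᵥ y :=
    (continuous_id.matrix_map Complex.continuous_re).matrix_mulVec continuous_const
  have hlim := (hcont.tendsto 0).comp (tendsto_pow_zero_of_spectralRadius_lt_one h)
  simpa only [Function.comp_def, hpow, Matrix.map_zero _ Complex.zero_re, Matrix.zero_mulVec]
    using hlim

theorem HasGrowthVector.one_le_spectralRadius (hB : ∀ i j, 0 ≤ B i j) (h : HasGrowthVector B 1) :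
    1 ≤ spectralRadius ℂ (B.map Complex.ofReal) := by
  obtain ⟨x, hx0, hx, hBx⟩ := h
  rw [one_smul] at hBx
  by_contra! hlt
  have hle (k : ℕ) : x ≤ B ^ k *ᵥ x := by
    induction k with
    | zero => rw [pow_zero, Matrix.one_mulVec]
    | succ k ih =>
      rw [pow_succ', ← Matrix.mulVec_mulVec]
      exact hBx.trans (mulVec_le_mulVec_of_nonneg hB ih)
  exact hx (le_antisymm
    (ge_of_tendsto' (tendsto_pow_mulVec_of_spectralRadius_lt_one hlt x) hle) hx0)

theorem one_le_spectralRadius_iff (hB : ∀ i j, 0 ≤ B i j) :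
    1 ≤ spectralRadius ℂ (B.map Complex.ofReal) ↔ HasGrowthVector B 1 :=
  ⟨fun h => hasGrowthVector_of_ofReal_le_spectralRadius hB one_pos (by rwa [ENNReal.ofReal_one]),
    HasGrowthVector.one_le_spectralRadius hB⟩

end SpectralRadius

end NonnegativeMatrix

section StronglyConnected

variable {ι : Type*} {E : ι → ι → Prop} {S : Finset ι}

/-- The vertex set `S` is strongly connected in the digraph with edge relation `E`: any two of its
vertices are joined by a directed path all of whose vertices lie in `S`. -/
def IsStronglyConnected (E : ι → ι → Prop) (S : Finset ι) : Prop :=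
  ∀ u ∈ S, ∀ v ∈ S, Relation.ReflTransGen (fun x y => x ∈ S ∧ y ∈ S ∧ E x y) u v

/-- `S` is the support of a growth vector of its own `S × S` block of `B`. The vector is a function
on all of `ι`, so that the same one can serve several sets `S`. -/
def SupportsGrowth (B : Matrix ι ι ℝ) (c : ℝ) (S : Finset ι) : Prop :=
  S.Nonempty ∧ ∃ x : ι → ℝ, (∀ i ∈ S, 0 < x i) ∧ ∀ i ∈ S, c * x i ≤ ∑ j ∈ S, B i j * x j

variable {B : Matrix ι ι ℝ} {c : ℝ}

theorem HasGrowthVector.exists_supportsGrowth [Fintype ι] (h : HasGrowthVector B c) :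
    ∃ S, SupportsGrowth B c S := by
  obtain ⟨x, hx0, hx, hcx⟩ := h
  obtain ⟨i, hi⟩ := Function.ne_iff.1 hx
  refine ⟨({j | 0 < x j} : Finset ι), ⟨i, ?_⟩, x, fun j hj => (Finset.mem_filter.1 hj).2,
    fun j _ => (hcx j).trans_eq (Finset.sum_filter_of_ne fun k _ hk => ?_).symm⟩
  · exact Finset.mem_filter.2 ⟨Finset.mem_univ i, (hx0 i).lt_of_ne' hi⟩
  · exact (hx0 k).lt_of_ne' (right_ne_zero_of_mul hk)

theorem SupportsGrowth.hasGrowthVector_submatrix (h : SupportsGrowth B c S) :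
    HasGrowthVector (B.submatrix ((↑) : S → ι) (↑)) c := by
  obtain ⟨⟨i, hi⟩, x, hxpos, hx⟩ := h
  refine ⟨fun j => x j, fun j => (hxpos j j.2).le, fun h0 => ?_, fun j => ?_⟩
  · exact (hxpos i hi).ne' (congrFun h0 ⟨i, hi⟩)
  · exact (hx j j.2).trans_eq (Finset.sum_coe_sort S fun k => B j k * x k).symm

theorem SupportsGrowth.of_subset {R : Finset ι} (h : SupportsGrowth B c S) (hRS : R ⊆ S)
    (hR : R.Nonempty) (hzero : ∀ i ∈ R, ∀ j ∈ S, j ∉ R → B i j = 0) : SupportsGrowth B c R := by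
  obtain ⟨-, x, hxpos, hx⟩ := h
  refine ⟨hR, x, fun i hi => hxpos i (hRS hi), fun i hi => (hx i (hRS hi)).trans_eq ?_⟩
  exact (Finset.sum_subset hRS fun j hj hjR => by rw [hzero i hi j hj hjR, zero_mul]).symm

-- The part of `S` reachable from a vertex `u` inside `S` again supports growth.
theorem isStronglyConnected_of_minimal_supportsGrowth (hE : ∀ i j, ¬E i j → B i j = 0)
    (h : Minimal (SupportsGrowth B c) S) : IsStronglyConnected E S := by
  intro u hu v hv
  let R : Finset ι :=
    {w ∈ S | Relation.ReflTransGen (fun x y => x ∈ S ∧ y ∈ S ∧ E x y) u w}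
  have hRS : R ⊆ S := Finset.filter_subset _ S
  have hR : SupportsGrowth B c R := by
    refine h.prop.of_subset hRS ⟨u, Finset.mem_filter.2 ⟨hu, .refl⟩⟩ fun i hi j hj hjR => ?_
    refine hE i j fun hij => hjR (Finset.mem_filter.2 ⟨hj, ?_⟩)
    exact (Finset.mem_filter.1 hi).2.tail ⟨hRS hi, hj, hij⟩
  exact (Finset.mem_filter.1 (h.le_of_le hR hRS hv)).2

theorem HasGrowthVector.exists_isStronglyConnected [Fintype ι] (hE : ∀ i j, ¬E i j → B i j = 0)
    (h : HasGrowthVector B c) :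
    ∃ S : Finset ι, S.Nonempty ∧ IsStronglyConnected E S ∧
      HasGrowthVector (B.submatrix ((↑) : S → ι) (↑)) c := by
  obtain ⟨S, hS⟩ := exists_minimal_of_wellFoundedLT _ h.exists_supportsGrowth
  exact ⟨S, hS.prop.1, isStronglyConnected_of_minimal_supportsGrowth hE hS,
    hS.prop.hasGrowthVector_submatrix⟩

end StronglyConnected

section Exponents

variable {ι : Type*} {E : ι → ι → Prop} {r : ι → ι → ℝ} {t : ℝ}

/-- The matrix `A ^ t` of the construction, with entry `r i j ^ t` at the edges `(i, j)` of the
digraph `E` and `0` elsewhere. -/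
noncomputable def weightMatrix (E : ι → ι → Prop) (r : ι → ι → ℝ) (t : ℝ) : Matrix ι ι ℝ :=
  Matrix.of fun i j => if E i j then r i j ^ t else 0

theorem weightMatrix_of_edge {i j : ι} (h : E i j) : weightMatrix E r t i j = r i j ^ t :=
  if_pos h

theorem weightMatrix_of_not_edge {i j : ι} (h : ¬E i j) : weightMatrix E r t i j = 0 :=
  if_neg h

theorem weightMatrix_pos (hr0 : ∀ u v, E u v → 0 < r u v) {i j : ι} (h : E i j) :
    0 < weightMatrix E r t i j :=
  (Real.rpow_pos_of_pos (hr0 i j h) t).trans_eq (weightMatrix_of_edge h).symm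

theorem weightMatrix_nonneg (hr0 : ∀ u v, E u v → 0 < r u v) (i j : ι) :
    0 ≤ weightMatrix E r t i j := by
  by_cases h : E i j
  · exact (weightMatrix_pos hr0 h).le
  · exact (weightMatrix_of_not_edge h).ge

theorem edge_of_weightMatrix_pos {i j : ι} (h : 0 < weightMatrix E r t i j) : E i j :=
  by_contra fun hij => h.ne' (weightMatrix_of_not_edge hij)

theorem continuous_weightMatrix (hr0 : ∀ u v, E u v → 0 < r u v) :
    Continuous (weightMatrix E r) := by
  refine continuous_matrix fun i j => ?_
  by_cases h : E i j
  · simpa only [weightMatrix_of_edge h] using Real.continuous_const_rpow (hr0 i j h).ne'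
  · simpa only [weightMatrix_of_not_edge h] using continuous_const

theorem map_ofReal_submatrix_weightMatrix {κ : Type*} (e : κ → ι) :
    ((weightMatrix E r t).submatrix e e).map Complex.ofReal =
      Matrix.of fun i j => if E (e i) (e j) then ((r (e i) (e j) ^ t : ℝ) : ℂ) else 0 :=
  Matrix.ext fun _ _ => (apply_ite _ _ _ _).trans (if_congr Iff.rfl rfl Complex.ofReal_zero)

theorem exists_ratio_le [Finite ι] (hr1 : ∀ u v, E u v → r u v < 1) :
    ∃ ρ ∈ Ioo (0 : ℝ) 1, ∀ u v, E u v → r u v ≤ ρ := by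
  have hev : ∀ᶠ ρ in 𝓝[<] (1 : ℝ), ∀ u v, E u v → r u v ≤ ρ := by
    simp only [eventually_all]
    exact fun u v huv => mem_of_superset (Ioo_mem_nhdsLT (hr1 u v huv)) fun ρ hρ => hρ.1.le
  obtain ⟨ρ, hρ, hρ01⟩ := (hev.and (Ioo_mem_nhdsLT one_pos)).exists
  exact ⟨ρ, hρ01, hρ⟩

variable [Fintype ι]

/-- The exponents `t ≥ 0` at which the Perron root of the whole matrix `A ^ t` is at least `1`. -/
def growthExponents (E : ι → ι → Prop) (r : ι → ι → ℝ) : Set ℝ :=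
  {t | 0 ≤ t ∧ HasGrowthVector (weightMatrix E r t) 1}

theorem zero_mem_growthExponents [Nonempty ι] (hr0 : ∀ u v, E u v → 0 < r u v)
    (hE : ∀ u, ∃ v, E u v) :
    0 ∈ growthExponents E r := by
  refine ⟨le_rfl, 1, zero_le_one, one_ne_zero, fun u => ?_⟩
  obtain ⟨v, huv⟩ := hE u
  calc ((1 : ℝ) • (1 : ι → ℝ)) u = weightMatrix E r 0 u v * 1 := by
        rw [one_smul, weightMatrix_of_edge huv, Real.rpow_zero, mul_one, Pi.one_apply]
    _ ≤ ∑ j, weightMatrix E r 0 u j * 1 :=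
      Finset.single_le_sum (f := fun j => weightMatrix E r 0 u j * 1)
        (fun j _ => mul_nonneg (weightMatrix_nonneg hr0 u j) zero_le_one) (Finset.mem_univ v)

theorem bddAbove_growthExponents (hr0 : ∀ u v, E u v → 0 < r u v)
    (hr1 : ∀ u v, E u v → r u v < 1) : BddAbove (growthExponents E r) := by
  obtain ⟨ρ, hρ01, hρ⟩ := exists_ratio_le hr1
  have hlim : Tendsto (fun t : ℝ => Fintype.card ι * ρ ^ t) atTop (𝓝 0) := by
    simpa only [mul_zero] using (tendsto_rpow_atTop_of_base_lt_one ρ (by linarith [hρ01.1])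
      hρ01.2).const_mul (Fintype.card ι : ℝ)
  obtain ⟨T, hT⟩ := eventually_atTop.1 (hlim.eventually_lt_const one_pos)
  refine ⟨T, fun t ht => le_of_not_ge fun hTt => (hT t hTt).not_ge ?_⟩
  refine ht.2.le_card_mul (Real.rpow_nonneg hρ01.1.le t) fun i j => ?_
  by_cases hij : E i j
  · rw [weightMatrix_of_edge hij]
    exact Real.rpow_le_rpow (hr0 i j hij).le (hρ i j hij) ht.1
  · rw [weightMatrix_of_not_edge hij]
    exact Real.rpow_nonneg hρ01.1.le t

theorem isCompact_growthExponents (hr0 : ∀ u v, E u v → 0 < r u v)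
    (hr1 : ∀ u v, E u v → r u v < 1) : IsCompact (growthExponents E r) := by
  obtain ⟨T, hT⟩ := bddAbove_growthExponents hr0 hr1
  have himage : growthExponents E r = Prod.fst ''
      ((Icc 0 T ×ˢ stdSimplex ℝ ι) ∩ {p | p.2 ≤ weightMatrix E r p.1 *ᵥ p.2}) := by
    ext t
    constructor
    · intro ht
      obtain ⟨x, hx, hle⟩ := ht.2.exists_mem_stdSimplex
      exact ⟨(t, x), ⟨⟨⟨ht.1, hT ht⟩, hx⟩, by rwa [one_smul] at hle⟩, rfl⟩
    · rintro ⟨⟨t, x⟩, ⟨⟨ht, hx⟩, hle⟩, rfl⟩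
      exact ⟨ht.1, hasGrowthVector_of_mem_stdSimplex hx (by rwa [one_smul])⟩
  rw [himage]
  refine ((isCompact_Icc.prod (isCompact_stdSimplex ℝ ι)).inter_right ?_).image continuous_fst
  exact isClosed_le continuous_snd
    (((continuous_weightMatrix hr0).comp continuous_fst).matrix_mulVec continuous_snd)

theorem exists_gt_hasGrowthVector_weightMatrix {c : ℝ} (hr0 : ∀ u v, E u v → 0 < r u v)
    (hc : 1 < c) (h : HasGrowthVector (weightMatrix E r t) c) :
    ∃ t' > t, HasGrowthVector (weightMatrix E r t') 1 := by
  have hev : ∀ᶠ t' in 𝓝[>] t, ∀ i j, weightMatrix E r t i j ≤ c * weightMatrix E r t' i j := by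
    simp only [eventually_all]
    intro i j
    by_cases hij : E i j
    · have hlt := lt_mul_of_one_lt_left (weightMatrix_pos (t := t) hr0 hij) hc
      have hcont : Continuous fun t' => c * weightMatrix E r t' i j :=
        ((continuous_weightMatrix hr0).matrix_elem i j).const_mul c
      exact ((hcont.tendsto t).eventually_const_le hlt).filter_mono nhdsWithin_le_nhds
    · simp only [weightMatrix_of_not_edge hij, mul_zero, le_refl, eventually_true]
  obtain ⟨t', hle, htt'⟩ := (hev.and self_mem_nhdsWithin).exists
  obtain ⟨x, hx0, hx, hcx⟩ := h
  refine ⟨t', htt', x, hx0, hx, fun i => ?_⟩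
  rw [one_smul]
  refine le_of_mul_le_mul_left ?_ (one_pos.trans hc)
  calc c * x i ≤ ∑ j, weightMatrix E r t i j * x j := hcx i
    _ ≤ ∑ j, c * weightMatrix E r t' i j * x j :=
      Finset.sum_le_sum fun j _ => mul_le_mul_of_nonneg_right (hle i j) (hx0 j)
    _ = c * ∑ j, weightMatrix E r t' i j * x j := by simp only [Finset.mul_sum, mul_assoc]

variable [DecidableEq ι]

/-- The exponents `t ≥ 0` at which some block of `A ^ t` indexed by a nonempty strongly connected
vertex set has spectral radius `1`. -/
def criticalExponents (E : ι → ι → Prop) (r : ι → ι → ℝ) : Set ℝ :=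
  {t | 0 ≤ t ∧ ∃ S : Finset ι, S.Nonempty ∧ IsStronglyConnected E S ∧
    spectralRadius ℂ (Matrix.of fun i j : {x : ι // x ∈ S} =>
      if E i.1 j.1 then ((r i.1 j.1 ^ t : ℝ) : ℂ) else 0) = 1}

theorem criticalExponents_subset_growthExponents (hr0 : ∀ u v, E u v → 0 < r u v) :
    criticalExponents E r ⊆ growthExponents E r := by
  rintro t ⟨ht, S, -, -, hS⟩
  rw [← map_ofReal_submatrix_weightMatrix] at hS
  have hnonneg (i j : S) : 0 ≤ (weightMatrix E r t).submatrix ((↑) : S → ι) (↑) i j :=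
    weightMatrix_nonneg hr0 i j
  have hgrowth := (one_le_spectralRadius_iff hnonneg).1 hS.ge
  exact ⟨ht, hgrowth.of_submatrix Subtype.val_injective (weightMatrix_nonneg hr0)⟩

theorem isGreatest_criticalExponents (hr0 : ∀ u v, E u v → 0 < r u v)
    (ht : IsGreatest (growthExponents E r) t) : IsGreatest (criticalExponents E r) t := by
  refine ⟨⟨ht.1.1, ?_⟩, fun t' ht' => ht.2 (criticalExponents_subset_growthExponents hr0 ht')⟩
  obtain ⟨S, hS, hSconn, hgrowth⟩ :=
    ht.1.2.exists_isStronglyConnected fun i j hij => weightMatrix_of_not_edge hij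
  have hnonneg (i j : S) : 0 ≤ (weightMatrix E r t).submatrix ((↑) : S → ι) (↑) i j :=
    weightMatrix_nonneg hr0 i j
  refine ⟨S, hS, hSconn, ?_⟩
  rw [← map_ofReal_submatrix_weightMatrix]
  refine le_antisymm (le_of_not_gt fun hlt => ?_) (hgrowth.one_le_spectralRadius hnonneg)
  obtain ⟨c, hc1, hc⟩ := ENNReal.lt_iff_exists_nnreal_btwn.1 hlt
  have hcgrowth := hasGrowthVector_of_ofReal_le_spectralRadius hnonneg (c := c)
    (one_pos.trans (mod_cast hc1)) (by rw [ENNReal.ofReal_coe_nnreal]; exact hc.le)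
  obtain ⟨t', htt', ht'⟩ := exists_gt_hasGrowthVector_weightMatrix hr0 (mod_cast hc1)
    (hcgrowth.of_submatrix Subtype.val_injective (weightMatrix_nonneg hr0))
  exact htt'.not_ge (ht.2 ⟨ht.1.1.trans htt'.le, ht'⟩)

end Exponents

theorem le_div_mul_rpow_of_rescaling {κ : Type*} {a d : κ → ℝ} {t ρ δ M : ℝ} (ht : 0 < t)
    (hρ : ρ ∈ Ioo 0 1) (hδ : 0 < δ) (hM : 0 ≤ M) (hd : ∀ i, 0 ≤ d i) (ha : ∀ i, a i ≤ M)
    (h : ∀ i, δ ≤ d i ∨ ∃ j, ∃ s ∈ Ioc 0 ρ, d i = s * d j ∧ a i = s ^ t * a j) (i : κ) :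
    a i ≤ M / δ ^ t * d i ^ t := by
  have hK : 0 ≤ M / δ ^ t := div_nonneg hM (Real.rpow_nonneg hδ.le t)
  have hρt : 0 ≤ ρ ^ t := Real.rpow_nonneg hρ.1.le t
  have hexcess (k : ℕ) (i : κ) : a i - M / δ ^ t * d i ^ t ≤ (ρ ^ t) ^ k * M := by
    induction k generalizing i with
    | zero =>
      rw [pow_zero, one_mul]
      exact (sub_le_self _ (mul_nonneg hK (Real.rpow_nonneg (hd i) t))).trans (ha i)
    | succ k ih =>
      have hbound : 0 ≤ (ρ ^ t) ^ k * M := mul_nonneg (pow_nonneg hρt k) hM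
      rw [pow_succ', mul_assoc]
      rcases h i with hi | ⟨j, s, hs, hdi, hai⟩
      · have hle : M ≤ M / δ ^ t * d i ^ t := by
          rw [div_mul_eq_mul_div, le_div_iff₀ (Real.rpow_pos_of_pos hδ t)]
          exact mul_le_mul_of_nonneg_left (Real.rpow_le_rpow hδ.le hi ht.le) hM
        exact (sub_nonpos.2 ((ha i).trans hle)).trans (mul_nonneg hρt hbound)
      · calc a i - M / δ ^ t * d i ^ t = s ^ t * (a j - M / δ ^ t * d j ^ t) := by
              rw [hdi, hai, Real.mul_rpow hs.1.le (hd j)]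
              ring
          _ ≤ s ^ t * ((ρ ^ t) ^ k * M) :=
              mul_le_mul_of_nonneg_left (ih j) (Real.rpow_nonneg hs.1.le t)
          _ ≤ ρ ^ t * ((ρ ^ t) ^ k * M) :=
              mul_le_mul_of_nonneg_right (Real.rpow_le_rpow hs.1.le hs.2 ht.le) hbound
  have hlim : Tendsto (fun k : ℕ => (ρ ^ t) ^ k * M) atTop (𝓝 0) := by
    simpa only [zero_mul] using (tendsto_pow_atTop_nhds_zero_of_lt_one hρt
      (Real.rpow_lt_one hρ.1.le hρ.2 ht)).mul_const M
  exact sub_nonpos.1 (ge_of_tendsto' hlim (hexcess · i))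

section HausdorffMeasure

variable {X : Type*} [EMetricSpace X]

/-- The size-`δ` approximation of the Hausdorff measure `μH[t]`: coverings by sets of diameter at
most `δ` are used. -/
noncomputable def hausdorffPre (X : Type*) [EMetricSpace X] (t : ℝ) (δ : ℝ≥0∞) : OuterMeasure X :=
  OuterMeasure.mkMetric'.pre (fun s => Metric.ediam s ^ t) δ

theorem hausdorffPre_anti {t : ℝ} {δ δ' : ℝ≥0∞} (h : δ ≤ δ') (s : Set X) :
    hausdorffPre X t δ' s ≤ hausdorffPre X t δ s :=
  OuterMeasure.mkMetric'.mono_pre _ h s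

theorem hausdorffPre_image_le {Y : Type*} [EMetricSpace Y] {g : X → Y} {K : ℝ≥0}
    (hg : LipschitzWith K g) (hK : K ≠ 0) {t : ℝ} (ht : 0 ≤ t) (δ : ℝ≥0∞) (s : Set X) :
    hausdorffPre Y t (K * δ) (g '' s) ≤ K ^ t * hausdorffPre X t δ s := by
  have hK0 : (K : ℝ≥0∞) ^ t ≠ 0 := by simp [hK]
  have hKtop : (K : ℝ≥0∞) ^ t ≠ ∞ := ENNReal.rpow_ne_top_of_nonneg ht ENNReal.coe_ne_top
  have hle : ((K : ℝ≥0∞) ^ t)⁻¹ • OuterMeasure.comap g (hausdorffPre Y t (K * δ)) ≤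
      hausdorffPre X t δ := by
    refine OuterMeasure.mkMetric'.le_pre.2 fun u hu => ?_
    have hgu : Metric.ediam (g '' u) ≤ K * Metric.ediam u := hg.ediam_image_le u
    rw [smul_apply, OuterMeasure.comap_apply, smul_eq_mul,
      ENNReal.inv_mul_le_iff hK0 hKtop, ← ENNReal.mul_rpow_of_nonneg _ _ ht]
    exact (OuterMeasure.mkMetric'.pre_le (hgu.trans (by gcongr))).trans
      (ENNReal.rpow_le_rpow hgu ht)
  rw [← ENNReal.inv_mul_le_iff hK0 hKtop]
  exact hle s

theorem hausdorffMeasure_eq_zero_of_tendsto [MeasurableSpace X] [BorelSpace X] {t : ℝ} {s : Set X}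
    {δ : ℕ → ℝ≥0∞} (hδ0 : ∀ k, 0 < δ k) (hδ : Tendsto δ atTop (𝓝 0))
    (h : Tendsto (fun k => hausdorffPre X t (δ k) s) atTop (𝓝 0)) : μH[t] s = 0 := by
  have hδ' : Tendsto δ atTop (𝓝[>] 0) :=
    tendsto_nhdsWithin_iff.2 ⟨hδ, Eventually.of_forall hδ0⟩
  rw [Measure.hausdorffMeasure, ← OuterMeasure.coe_mkMetric]
  exact tendsto_nhds_unique ((OuterMeasure.mkMetric'.tendsto_pre _ s).comp hδ') h

theorem dimH_univ_coe {Y : Type*} [EMetricSpace Y] (s : Set Y) :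
    dimH (univ : Set s) = dimH s := by
  rw [← isometry_subtype_coe.dimH_image, image_univ, Subtype.range_coe]

theorem dimH_univ_le_dimH_range_div {Z Y : Type*} [EMetricSpace Z] [EMetricSpace Y] {g : Z → Y}
    {K t : ℝ≥0} (ht : 0 < t) (h : ∀ z w, edist z w ≤ K * edist (g z) (g w) ^ (t : ℝ)) :
    dimH (univ : Set Z) ≤ dimH (range g) / t := by
  have hholder : HolderWith K t (rangeSplitting g) := fun y y' =>
    (h (rangeSplitting g y) (rangeSplitting g y')).trans_eq (by
      rw [apply_rangeSplitting g, apply_rangeSplitting g, Subtype.edist_eq])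
  have hinj : Function.Injective g := fun z w hzw => edist_le_zero.1 <| (h z w).trans_eq <| by
    rw [hzw, edist_self, ENNReal.zero_rpow_of_pos (NNReal.coe_pos.2 ht), mul_zero]
  have hsurj : Function.Surjective (rangeSplitting g) := fun z =>
    ⟨⟨g z, z, rfl⟩, hinj (apply_rangeSplitting g _)⟩
  rw [← hsurj.range_eq, ← dimH_univ_coe (range g)]
  exact hholder.dimH_range_le ht

end HausdorffMeasure

section Attractor

variable {ι X : Type*} [MetricSpace X] {E : ι → ι → Prop} {r : ι → ι → ℝ} {f : ι → ι → X → X}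
  {C : ι → Set X}

/-- The maps `f u v` attached to the edges of the digraph `E` are contracting similitudes with
ratios `r u v`. Nothing is required of `f u v` and `r u v` off the edges. -/
structure IsGraphDirectedSystem (E : ι → ι → Prop) (r : ι → ι → ℝ) (f : ι → ι → X → X) :
    Prop where
  ratio_pos : ∀ u v, E u v → 0 < r u v
  ratio_lt_one : ∀ u v, E u v → r u v < 1
  dist_map : ∀ u v, E u v → ∀ x y, dist (f u v x) (f u v y) = r u v * dist x y

/-- `C` is a vector of nonempty compact sets solving the graph-directed equations of `f` along the
digraph `E`. -/
structure IsAttractor (E : ι → ι → Prop) (f : ι → ι → X → X) (C : ι → Set X) : Prop where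
  nonempty : ∀ u, (C u).Nonempty
  isCompact : ∀ u, IsCompact (C u)
  eq_iUnion : ∀ u, C u = ⋃ v, ⋃ _ : E u v, f u v '' C v

theorem isGraphDirectedSystem_of_affine {V : Type*} [NormedAddCommGroup V] [NormedSpace ℝ V]
    {f : ι → ι → V → V} {a : ι → ι → V} (hr : ∀ u v, E u v → 0 < r u v ∧ r u v < 1)
    (hf : ∀ u v, E u v → ∀ x, f u v x = r u v • x + a u v) : IsGraphDirectedSystem E r f where
  ratio_pos u v huv := (hr u v huv).1
  ratio_lt_one u v huv := (hr u v huv).2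
  dist_map u v huv x y := by
    rw [hf u v huv, hf u v huv, dist_add_right, dist_smul₀, Real.norm_of_nonneg (hr u v huv).1.le]

namespace IsAttractor

theorem exists_edge_of_mem (hC : IsAttractor E f C) {u : ι} {y : X} (hy : y ∈ C u) :
    ∃ v, E u v ∧ ∃ z ∈ C v, f u v z = y := by
  rw [hC.eq_iUnion u] at hy
  obtain ⟨v, huv, hz⟩ := mem_iUnion₂.1 hy
  exact ⟨v, huv, hz⟩

theorem exists_edge (hC : IsAttractor E f C) (u : ι) : ∃ v, E u v :=
  let ⟨_, hy⟩ := hC.nonempty u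
  let ⟨v, huv, _⟩ := hC.exists_edge_of_mem hy
  ⟨v, huv⟩

theorem map_mem (hC : IsAttractor E f C) {u v : ι} (huv : E u v) {z : X} (hz : z ∈ C v) :
    f u v z ∈ C u := by
  rw [hC.eq_iUnion u]
  exact mem_iUnion₂.2 ⟨v, huv, z, hz, rfl⟩

theorem exists_pos_forall_dist_le [Finite ι] (hC : IsAttractor E f C) :
    ∃ D > 0, ∀ u, ∀ y ∈ C u, ∀ z ∈ C u, dist y z ≤ D := by
  refine ⟨Metric.diam (⋃ u, C u) + 1, by positivity, fun u y hy z hz => ?_⟩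
  have hle := Metric.dist_le_diam_of_mem (isCompact_iUnion hC.isCompact).isBounded
    (mem_iUnion_of_mem u hy) (mem_iUnion_of_mem u hz)
  linarith

end IsAttractor

theorem IsGraphDirectedSystem.infDist_map_le (hf : IsGraphDirectedSystem E r f) {u v : ι}
    (huv : E u v) {J J' : Set X} (hJ : J.Nonempty) (hJJ' : f u v '' J ⊆ J') (z : X) :
    Metric.infDist (f u v z) J' ≤ r u v * Metric.infDist z J := by
  rw [← div_le_iff₀' (hf.ratio_pos u v huv), Metric.le_infDist hJ]
  intro w hw
  rw [div_le_iff₀' (hf.ratio_pos u v huv), ← hf.dist_map u v huv]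
  exact Metric.infDist_le_dist_of_mem (hJJ' (mem_image_of_mem _ hw))

-- A point of the attractor at maximal distance from the invariant sets is the image of a point
-- at least as far away, so that the maximal distance is zero.
theorem IsAttractor.subset_of_image_subset [Finite ι] (hf : IsGraphDirectedSystem E r f)
    (hC : IsAttractor E f C) {J : ι → Set X} (hJ : ∀ u, (J u).Nonempty) (hJc : ∀ u, IsClosed (J u))
    (hinv : ∀ u v, E u v → f u v '' J v ⊆ J u) (u : ι) : C u ⊆ J u := by
  choose y hyC hymax using fun u =>
    (hC.isCompact u).exists_isMaxOn (hC.nonempty u)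
      (Metric.continuous_infDist_pt (J u)).continuousOn
  have : Nonempty ι := ⟨u⟩
  obtain ⟨w, hw⟩ := Finite.exists_max fun u => Metric.infDist (y u) (J u)
  have hle (u : ι) {z : X} (hz : z ∈ C u) :
      Metric.infDist z (J u) ≤ Metric.infDist (y w) (J w) :=
    (hymax u hz).trans (hw u)
  obtain ⟨v, hwv, z, hz, hzy⟩ := hC.exists_edge_of_mem (hyC w)
  have hcontr : Metric.infDist (y w) (J w) ≤ r w v * Metric.infDist (y w) (J w) :=
    calc Metric.infDist (y w) (J w) ≤ r w v * Metric.infDist z (J v) := by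
          rw [← hzy]
          exact hf.infDist_map_le hwv (hJ v) (hinv w v hwv) z
      _ ≤ r w v * Metric.infDist (y w) (J w) :=
          mul_le_mul_of_nonneg_left (hle v hz) (hf.ratio_pos w v hwv).le
  have hzero : Metric.infDist (y w) (J w) ≤ 0 := by
    by_contra! hpos
    exact hcontr.not_gt (mul_lt_of_lt_one_left hpos (hf.ratio_lt_one w v hwv))
  intro z hz
  rw [(hJc u).mem_iff_infDist_zero (hJ u)]
  exact le_antisymm ((hle u hz).trans hzero) Metric.infDist_nonneg

theorem IsAttractor.disjoint_image_of_image_subset [Finite ι] (hf : IsGraphDirectedSystem E r f)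
    (hC : IsAttractor E f C) {J : ι → Set X} (hJ : ∀ u, (J u).Nonempty) (hJc : ∀ u, IsClosed (J u))
    (hinv : ∀ u v, E u v → f u v '' J v ⊆ J u) {u v v' : ι}
    (hdisj : Disjoint (f u v '' J v) (f u v' '' J v')) :
    Disjoint (f u v '' C v) (f u v' '' C v') :=
  hdisj.mono (image_mono (hC.subset_of_image_subset hf hJ hJc hinv v))
    (image_mono (hC.subset_of_image_subset hf hJ hJc hinv v'))

theorem IsGraphDirectedSystem.lipschitzWith (hf : IsGraphDirectedSystem E r f) {u v : ι}
    (huv : E u v) : LipschitzWith (r u v).toNNReal (f u v) :=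
  LipschitzWith.of_dist_le_mul fun x y => by
    rw [Real.coe_toNNReal _ (hf.ratio_pos u v huv).le, hf.dist_map u v huv]

section UpperBound

variable [Fintype ι]

theorem IsAttractor.hausdorffPre_le_mulVec (hf : IsGraphDirectedSystem E r f)
    (hC : IsAttractor E f C) {t ρ : ℝ} (ht : 0 ≤ t) (hρ : ∀ u v, E u v → r u v ≤ ρ) {δ : ℝ≥0∞}
    {y : ι → ℝ} (hy0 : 0 ≤ y) (hy : ∀ v, hausdorffPre X t δ (C v) ≤ ENNReal.ofReal (y v)) (u : ι) :
    hausdorffPre X t (ENNReal.ofReal ρ * δ) (C u) ≤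
      ENNReal.ofReal ((weightMatrix E r t *ᵥ y) u) := by
  have hedge (v : ι) : hausdorffPre X t (ENNReal.ofReal ρ * δ) (⋃ _ : E u v, f u v '' C v) ≤
      ENNReal.ofReal (weightMatrix E r t u v * y v) := by
    by_cases huv : E u v
    · have hr := hf.ratio_pos u v huv
      simp only [huv, iUnion_true, weightMatrix_of_edge huv]
      calc hausdorffPre X t (ENNReal.ofReal ρ * δ) (f u v '' C v)
          ≤ hausdorffPre X t (ENNReal.ofReal (r u v) * δ) (f u v '' C v) :=
            hausdorffPre_anti (mul_le_mul_left (ENNReal.ofReal_le_ofReal (hρ u v huv)) δ) _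
        _ ≤ ENNReal.ofReal (r u v) ^ t * hausdorffPre X t δ (C v) :=
            hausdorffPre_image_le (hf.lipschitzWith huv) (Real.toNNReal_pos.2 hr).ne' ht δ (C v)
        _ ≤ ENNReal.ofReal (r u v) ^ t * ENNReal.ofReal (y v) := mul_le_mul_right (hy v) _
        _ = ENNReal.ofReal (r u v ^ t * y v) := by
            rw [ENNReal.ofReal_rpow_of_nonneg hr.le ht,
              ← ENNReal.ofReal_mul (Real.rpow_nonneg hr.le t)]
    · simp only [huv, iUnion_false, measure_empty, zero_le]
  calc hausdorffPre X t (ENNReal.ofReal ρ * δ) (C u)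
      ≤ ∑ v, hausdorffPre X t (ENNReal.ofReal ρ * δ) (⋃ _ : E u v, f u v '' C v) := by
        rw [hC.eq_iUnion u]
        exact measure_iUnion_fintype_le _ _
    _ ≤ ∑ v, ENNReal.ofReal (weightMatrix E r t u v * y v) := Finset.sum_le_sum fun v _ => hedge v
    _ = ENNReal.ofReal ((weightMatrix E r t *ᵥ y) u) := (ENNReal.ofReal_sum_of_nonneg fun v _ =>
        mul_nonneg (weightMatrix_nonneg hf.ratio_pos u v) (hy0 v)).symm

variable [DecidableEq ι]

theorem IsAttractor.hausdorffPre_le_pow_mulVec (hf : IsGraphDirectedSystem E r f)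
    (hC : IsAttractor E f C) {t ρ D : ℝ} (ht : 0 ≤ t) (hρ : ∀ u v, E u v → r u v ≤ ρ) (hD : 0 ≤ D)
    (hCD : ∀ u, ∀ y ∈ C u, ∀ z ∈ C u, dist y z ≤ D) (k : ℕ) (u : ι) :
    hausdorffPre X t (ENNReal.ofReal ρ ^ k * ENNReal.ofReal D) (C u) ≤
      ENNReal.ofReal ((weightMatrix E r t ^ k *ᵥ fun _ => D ^ t) u) := by
  suffices h : 0 ≤ weightMatrix E r t ^ k *ᵥ (fun _ => D ^ t) ∧ ∀ u,
      hausdorffPre X t (ENNReal.ofReal ρ ^ k * ENNReal.ofReal D) (C u) ≤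
        ENNReal.ofReal ((weightMatrix E r t ^ k *ᵥ fun _ => D ^ t) u) from h.2 u
  induction k with
  | zero =>
    rw [pow_zero, pow_zero, one_mul, Matrix.one_mulVec]
    refine ⟨fun _ => Real.rpow_nonneg hD t, fun u => ?_⟩
    have hdiam : Metric.ediam (C u) ≤ ENNReal.ofReal D := Metric.ediam_le_of_forall_dist_le (hCD u)
    rw [← ENNReal.ofReal_rpow_of_nonneg hD ht]
    exact (OuterMeasure.mkMetric'.pre_le hdiam).trans (ENNReal.rpow_le_rpow hdiam ht)
  | succ k ih =>
    rw [pow_succ', pow_succ', mul_assoc, ← Matrix.mulVec_mulVec]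
    refine ⟨?_, hC.hausdorffPre_le_mulVec hf ht hρ ih.1 ih.2⟩
    simpa only [Matrix.mulVec_zero] using
      mulVec_le_mulVec_of_nonneg (weightMatrix_nonneg hf.ratio_pos) ih.1

theorem IsAttractor.hausdorffMeasure_eq_zero [MeasurableSpace X] [BorelSpace X]
    (hf : IsGraphDirectedSystem E r f) (hC : IsAttractor E f C) {t : ℝ} (ht : 0 ≤ t)
    (h : spectralRadius ℂ ((weightMatrix E r t).map Complex.ofReal) < 1) (u : ι) :
    μH[t] (C u) = 0 := by
  obtain ⟨ρ, hρ01, hρ⟩ := exists_ratio_le hf.ratio_lt_one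
  obtain ⟨D, hD, hCD⟩ := hC.exists_pos_forall_dist_le
  have hδ : Tendsto (fun k : ℕ => ENNReal.ofReal ρ ^ k * ENNReal.ofReal D) atTop (𝓝 0) := by
    simpa only [zero_mul] using ENNReal.Tendsto.mul_const
      (ENNReal.tendsto_pow_atTop_nhds_zero_of_lt_one (ENNReal.ofReal_lt_one.2 hρ01.2))
      (Or.inr ENNReal.ofReal_ne_top)
  have hδ0 (k : ℕ) : 0 < ENNReal.ofReal ρ ^ k * ENNReal.ofReal D :=
    ENNReal.mul_pos (pow_ne_zero k (ENNReal.ofReal_pos.2 hρ01.1).ne') (ENNReal.ofReal_pos.2 hD).ne'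
  have hlim : Tendsto (fun k : ℕ => ENNReal.ofReal ((weightMatrix E r t ^ k *ᵥ fun _ => D ^ t) u))
      atTop (𝓝 0) := by
    simpa only [Pi.zero_apply, ENNReal.ofReal_zero] using ENNReal.tendsto_ofReal
      (tendsto_pi_nhds.1 (tendsto_pow_mulVec_of_spectralRadius_lt_one h fun _ => D ^ t) u)
  exact hausdorffMeasure_eq_zero_of_tendsto hδ0 hδ (tendsto_of_tendsto_of_tendsto_of_le_of_le
    tendsto_const_nhds hlim (fun _ => zero_le)
    (hC.hausdorffPre_le_pow_mulVec hf ht hρ hD.le hCD · u))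

theorem IsAttractor.dimH_iUnion_le (hf : IsGraphDirectedSystem E r f) (hC : IsAttractor E f C)
    {t : ℝ} (ht : 0 ≤ t) (h : spectralRadius ℂ ((weightMatrix E r t).map Complex.ofReal) < 1) :
    dimH (⋃ u, C u) ≤ ENNReal.ofReal t := by
  rw [dimH_iUnion]
  refine iSup_le fun u => ?_
  borelize X
  refine dimH_le_of_hausdorffMeasure_ne_top ?_
  rw [Real.coe_toNNReal t ht, hC.hausdorffMeasure_eq_zero hf ht h u]
  exact ENNReal.zero_ne_top

end UpperBound

section LowerBound

/-- The map `h` assigns to every state `p ∈ Ω` a point of the attractor, in such a way that the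
point of `p` is obtained from the point of the state `next p` through the edge of the digraph `E`
joining their labels. -/
structure IsCoding {ι Ω X : Type*} (E : ι → ι → Prop) (f : ι → ι → X → X) (C : ι → Set X)
    (label : Ω → ι) (next : Ω → Ω) (h : Ω → X) : Prop where
  edge : ∀ p, E (label p) (label (next p))
  mem : ∀ p, h p ∈ C (label p)
  eq_map : ∀ p, h p = f (label p) (label (next p)) (h (next p))

theorem IsAttractor.exists_isCoding [Finite ι] (hf : IsGraphDirectedSystem E r f)
    (hC : IsAttractor E f C) {Ω : Type*} {label : Ω → ι} {next : Ω → Ω}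
    (hnext : ∀ p, E (label p) (label (next p))) : ∃ h, IsCoding E f C label next h := by
  obtain ⟨ρ, hρ01, hρ⟩ := exists_ratio_le hf.ratio_lt_one
  obtain ⟨D, -, hCD⟩ := hC.exists_pos_forall_dist_le
  choose y hy using hC.nonempty
  let T (g : Ω → X) (p : Ω) : X := f (label p) (label (next p)) (g (next p))
  let H (k : ℕ) : Ω → X := T^[k] (y ∘ label)
  have hsucc (k : ℕ) (p : Ω) : H (k + 1) p = f (label p) (label (next p)) (H k (next p)) :=
    congrFun (Function.iterate_succ_apply' T k _) p
  have hmem (k : ℕ) (p : Ω) : H k p ∈ C (label p) := by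
    induction k generalizing p with
    | zero => exact hy (label p)
    | succ k ih => exact hsucc k p ▸ hC.map_mem (hnext p) (ih (next p))
  have hdist (k : ℕ) (p : Ω) : dist (H k p) (H (k + 1) p) ≤ D * ρ ^ k := by
    induction k generalizing p with
    | zero => exact (hCD _ _ (hmem 0 p) _ (hmem 1 p)).trans_eq (by rw [pow_zero, mul_one])
    | succ k ih =>
      rw [hsucc (k + 1), hsucc k, hf.dist_map _ _ (hnext p), pow_succ', mul_left_comm]
      exact mul_le_mul (hρ _ _ (hnext p)) (ih _) dist_nonneg hρ01.1.le
  choose h hhC hh using fun p => cauchySeq_tendsto_of_isComplete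
    (hC.isCompact (label p)).isComplete (hmem · p)
    (cauchySeq_of_le_geometric ρ D hρ01.2 (hdist · p))
  refine ⟨h, hnext, hhC, fun p => tendsto_nhds_unique ((hh p).comp (tendsto_add_atTop_nat 1)) ?_⟩
  simp only [Function.comp_def, hsucc]
  exact ((hf.lipschitzWith (hnext p)).continuous.tendsto _).comp (hh (next p))

theorem IsAttractor.exists_pos_forall_le_dist [Finite ι] (hf : IsGraphDirectedSystem E r f)
    (hC : IsAttractor E f C)
    (hsep : ∀ u v v', E u v → E u v' → v ≠ v' → Disjoint (f u v '' C v) (f u v' '' C v')) :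
    ∃ δ > 0, ∀ u v v', E u v → E u v' → v ≠ v' →
      ∀ y ∈ C v, ∀ z ∈ C v', δ ≤ dist (f u v y) (f u v' z) := by
  have hcompact {u v : ι} (huv : E u v) : IsCompact (f u v '' C v) :=
    (hC.isCompact v).image (hf.lipschitzWith huv).continuous
  have hev : ∀ᶠ δ in 𝓝[>] (0 : ℝ), ∀ u v v', E u v → E u v' → v ≠ v' →
      ∀ y ∈ C v, ∀ z ∈ C v', δ ≤ dist (f u v y) (f u v' z) := by
    simp only [eventually_all]
    intro u v v' huv huv' hvv'
    obtain ⟨ε, hε, hlt⟩ := Metric.exists_pos_forall_lt_edist (hcompact huv)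
      (hcompact huv').isClosed (hsep u v v' huv huv' hvv')
    filter_upwards [Ioo_mem_nhdsGT (NNReal.coe_pos.2 hε)] with δ hδ y hy z hz
    have hyz := hlt _ (mem_image_of_mem _ hy) _ (mem_image_of_mem _ hz)
    rw [edist_nndist, ENNReal.coe_lt_coe] at hyz
    exact hδ.2.le.trans (NNReal.coe_lt_coe.2 hyz).le
  obtain ⟨δ, hδ, hδ0⟩ := (hev.and self_mem_nhdsWithin).exists
  exact ⟨δ, hδ0, hδ⟩

theorem IsCoding.dist_le_mul_rpow {Ω : Type*} {label : Ω → ι} {next : Ω → Ω} {h : Ω → X}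
    (hh : IsCoding E f C label next h) (hf : IsGraphDirectedSystem E r f)
    {t ρ δ M : ℝ} (ht : 0 < t) (hρ01 : ρ ∈ Ioo 0 1) (hρ : ∀ u v, E u v → r u v ≤ ρ) (hδ : 0 < δ)
    (hgap : ∀ u v v', E u v → E u v' → v ≠ v' →
      ∀ y ∈ C v, ∀ z ∈ C v', δ ≤ dist (f u v y) (f u v' z))
    {z : Ω → ℝ} {off : ι → ι → ℝ} (hM : 0 ≤ M) (hzM : ∀ p q, dist (z p) (z q) ≤ M)
    (hz : ∀ p, z p = off (label p) (label (next p)) +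
      r (label p) (label (next p)) ^ t * z (next p))
    {p q : Ω} (hpq : label p = label q) :
    dist (z p) (z q) ≤ M / δ ^ t * dist (h p) (h q) ^ t := by
  refine le_div_mul_rpow_of_rescaling (κ := {pq : Ω × Ω // label pq.1 = label pq.2})
    (a := fun i => dist (z i.1.1) (z i.1.2)) (d := fun i => dist (h i.1.1) (h i.1.2)) ht hρ01 hδ hM
    (fun _ => dist_nonneg) (fun i => hzM _ _) ?_ ⟨(p, q), hpq⟩
  rintro ⟨⟨p, q⟩, hpq⟩
  have hq := hh.edge q
  have hhq := hh.eq_map q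
  have hzq := hz q
  rw [← hpq] at hq hhq hzq
  by_cases hnext : label (next p) = label (next q)
  · have hr := hf.ratio_pos _ _ (hh.edge p)
    rw [← hnext] at hhq hzq
    refine Or.inr ⟨⟨(next p, next q), hnext⟩, r (label p) (label (next p)),
      ⟨hr, hρ _ _ (hh.edge p)⟩, ?_, ?_⟩
    · rw [hh.eq_map p, hhq, hf.dist_map _ _ (hh.edge p)]
    · rw [hz p, hzq, dist_add_left, Real.dist_eq, ← mul_sub, abs_mul,
        abs_of_pos (Real.rpow_pos_of_pos hr t), Real.dist_eq]
  · left
    rw [hh.eq_map p, hhq]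
    exact hgap _ _ _ (hh.edge p) hq hnext _ (hh.mem _) _ (hh.mem _)

theorem IsAttractor.exists_dist_le_mul_rpow [Fintype ι] (hf : IsGraphDirectedSystem E r f)
    (hC : IsAttractor E f C)
    (hsep : ∀ u v v', E u v → E u v' → v ≠ v' → Disjoint (f u v '' C v) (f u v' '' C v'))
    {t : ℝ} (ht : 0 < t) {x : ι → ℝ} (hx0 : 0 ≤ x) (hx : x ≤ weightMatrix E r t *ᵥ x) (u : ι) :
    ∃ K : ℝ≥0, ∃ g : Ico 0 (x u) → X, (∀ z, g z ∈ C u) ∧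
      ∀ z w, dist z w ≤ K * dist (g z) (g w) ^ t := by
  obtain ⟨ρ, hρ01, hρ⟩ := exists_ratio_le hf.ratio_lt_one
  obtain ⟨δ, hδ, hgap⟩ := hC.exists_pos_forall_le_dist hf hsep
  obtain ⟨off, hoff⟩ := exists_subdivision (weightMatrix_nonneg hf.ratio_pos) hx
  have hstep (p : Σ u, Ico 0 (x u)) : ∃ q : Σ u, Ico 0 (x u),
      E p.1 q.1 ∧ (p.2 : ℝ) = off p.1 q.1 + r p.1 q.1 ^ t * q.2 := by
    obtain ⟨v, hpos, w, hw, heq⟩ := hoff p.1 p.2 p.2.2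
    have huv := edge_of_weightMatrix_pos hpos
    exact ⟨⟨v, w, hw⟩, huv, by rwa [weightMatrix_of_edge huv] at heq⟩
  choose next hedge hnext using hstep
  obtain ⟨h, hh⟩ := hC.exists_isCoding hf (label := Sigma.fst) hedge
  have hM : 0 ≤ ∑ v, x v := Finset.sum_nonneg fun v _ => hx0 v
  have hdist (p q : Σ u, Ico 0 (x u)) : dist (p.2 : ℝ) q.2 ≤ ∑ v, x v := by
    have hmem (p : Σ u, Ico 0 (x u)) : (p.2 : ℝ) ∈ Icc 0 (∑ v, x v) := ⟨p.2.2.1,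
      p.2.2.2.le.trans (Finset.single_le_sum (fun v _ => hx0 v) (Finset.mem_univ p.1))⟩
    simpa only [sub_zero] using Real.dist_le_of_mem_Icc (hmem p) (hmem q)
  exact ⟨⟨_, div_nonneg hM (Real.rpow_nonneg hδ.le t)⟩, fun z => h ⟨u, z⟩, fun z => hh.mem ⟨u, z⟩,
    fun z w => hh.dist_le_mul_rpow hf ht hρ01 hρ hδ hgap hM hdist hnext
      (p := ⟨u, z⟩) (q := ⟨u, w⟩) rfl⟩

theorem IsAttractor.le_dimH [Fintype ι] (hf : IsGraphDirectedSystem E r f)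
    (hC : IsAttractor E f C)
    (hsep : ∀ u v v', E u v → E u v' → v ≠ v' → Disjoint (f u v '' C v) (f u v' '' C v'))
    {t : ℝ} (ht : 0 < t) {x : ι → ℝ} (hx0 : 0 ≤ x) (hx : x ≤ weightMatrix E r t *ᵥ x) {u : ι}
    (hu : 0 < x u) : ENNReal.ofReal t ≤ dimH (C u) := by
  lift t to ℝ≥0 using ht.le
  obtain ⟨K, g, hgC, hg⟩ := hC.exists_dist_le_mul_rpow hf hsep ht hx0 hx u
  have hbound (z w : Ico 0 (x u)) : edist z w ≤ K * edist (g z) (g w) ^ (t : ℝ) := by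
    rw [edist_dist, edist_dist, ENNReal.ofReal_rpow_of_nonneg dist_nonneg t.coe_nonneg,
      ← ENNReal.ofReal_coe_nnreal, ← ENNReal.ofReal_mul K.coe_nonneg]
    exact ENNReal.ofReal_le_ofReal (hg z w)
  have hIco : dimH (Ico 0 (x u)) = 1 := by
    rw [Real.dimH_of_nonempty_interior (by rwa [interior_Ico, nonempty_Ioo]), Module.finrank_self,
      Nat.cast_one]
  have hdim := dimH_univ_le_dimH_range_div (NNReal.coe_pos.1 ht) hbound
  rw [dimH_univ_coe, hIco, ENNReal.le_div_iff_mul_le (Or.inl (by exact_mod_cast ht.ne'))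
    (Or.inl ENNReal.coe_ne_top), one_mul] at hdim
  rw [ENNReal.ofReal_coe_nnreal]
  exact hdim.trans (dimH_mono (range_subset_iff.2 hgC))

end LowerBound

theorem stmt12_general [Finite ι] [DecidableEq ι] [Nonempty ι]
    (hf : IsGraphDirectedSystem E r f) (hC : IsAttractor E f C)
    (hsep : ∀ u v v', E u v → E u v' → v ≠ v' → Disjoint (f u v '' C v) (f u v' '' C v')) :
    dimH (⋃ u, C u) = ENNReal.ofReal (sSup (criticalExponents E r)) := by
  cases nonempty_fintype ι
  obtain ⟨t₀, ht₀⟩ := (isCompact_growthExponents hf.ratio_pos hf.ratio_lt_one).exists_isGreatest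
    ⟨0, zero_mem_growthExponents hf.ratio_pos hC.exists_edge⟩
  rw [(isGreatest_criticalExponents hf.ratio_pos ht₀).csSup_eq]
  apply le_antisymm
  · refine ENNReal.le_of_forall_pos_le_add fun ε hε _ => ?_
    have hsupercritical : t₀ + ε ∉ growthExponents E r := fun h =>
      (ht₀.2 h).not_gt (lt_add_of_pos_right t₀ (NNReal.coe_pos.2 hε))
    have hnonneg : 0 ≤ t₀ + ε := add_nonneg ht₀.1.1 ε.coe_nonneg
    rw [← ENNReal.ofReal_coe_nnreal, ← ENNReal.ofReal_add ht₀.1.1 ε.coe_nonneg]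
    refine hC.dimH_iUnion_le hf hnonneg (lt_of_not_ge fun h => hsupercritical ⟨hnonneg, ?_⟩)
    exact (one_le_spectralRadius_iff (weightMatrix_nonneg hf.ratio_pos)).1 h
  · rcases ht₀.1.1.eq_or_lt with hzero | hpos
    · exact (ENNReal.ofReal_of_nonpos hzero.ge).trans_le zero_le
    obtain ⟨x, hx0, hx, hgrowth⟩ := ht₀.1.2
    rw [one_smul] at hgrowth
    obtain ⟨u, hu⟩ := Function.ne_iff.1 hx
    exact (hC.le_dimH hf hsep hpos hx0 hgrowth ((hx0 u).lt_of_ne' hu)).trans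
      (dimH_mono (subset_iUnion C u))

end Attractor

/-- for a graph-directed construction (not necessarily strongly
connected), the Hausdorff dimension of `K* = ⋃_u C_u` is the supremum of those `t ≥ 0`
for which some strongly connected set `S` of vertices has the spectral radius of the
`S × S` submatrix of `A^t` equal to `1`. -/
theorem stmt12 (n : ℕ) (hn : 1 ≤ n)
    (E : Fin n → Fin n → Prop) (hE : ∀ u, ∃ v, E u v)
    (r a : Fin n → Fin n → ℝ)
    (hr : ∀ u v, E u v → 0 < r u v ∧ r u v < 1)
    (f : Fin n → Fin n → ℝ → ℝ) (hf : ∀ u v x, f u v x = r u v * x + a u v)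
    -- the pairwise disjoint nonempty bounded closed intervals `J_u`
    (c d : Fin n → ℝ) (hJne : ∀ u, c u ≤ d u)
    (hJdisj : ∀ u v, u ≠ v → Disjoint (Icc (c u) (d u)) (Icc (c v) (d v)))
    (hinv : ∀ u, (⋃ (v : Fin n) (_ : E u v), f u v '' Icc (c v) (d v)) ⊆ Icc (c u) (d u))
    (hsep : ∀ u v v', E u v → E u v' → v ≠ v' →
      Disjoint (f u v '' Icc (c v) (d v)) (f u v' '' Icc (c v') (d v')))
    -- the attractor `(C_1,…,C_n)`
    (C : Fin n → Set ℝ)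
    (hC : ∀ u, (C u).Nonempty ∧ IsCompact (C u))
    (hCattr : ∀ u, C u = ⋃ (v : Fin n) (_ : E u v), f u v '' C v) :
    dimH (⋃ u, C u) = ENNReal.ofReal (sSup {t : ℝ | 0 ≤ t ∧
      ∃ S : Finset (Fin n), S.Nonempty ∧
        (∀ u ∈ S, ∀ v ∈ S,
          Relation.ReflTransGen (fun x y => x ∈ S ∧ y ∈ S ∧ E x y) u v) ∧
        spectralRadius ℂ
          (Matrix.of fun i j : {x : Fin n // x ∈ S} =>
            if E i.1 j.1 then ((r i.1 j.1 ^ t : ℝ) : ℂ) else 0) = 1}) := by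
  have : Nonempty (Fin n) := ⟨⟨0, hn⟩⟩
  have hsys : IsGraphDirectedSystem E r f :=
    isGraphDirectedSystem_of_affine hr fun u v _ => hf u v
  have hatt : IsAttractor E f C := ⟨fun u => (hC u).1, fun u => (hC u).2, hCattr⟩
  exact stmt12_general hsys hatt fun u v v' huv huv' hvv' =>
    hatt.disjoint_image_of_image_subset hsys (fun u => nonempty_Icc.2 (hJne u))
      (fun _ => isClosed_Icc) (fun u => iUnion₂_subset_iff.1 (hinv u)) (hsep u v v' huv huv' hvv')
end

section
/- There exist real numbers 1 < β_0 < β_1 such that the function β ↦ dim_H(U^{(β)}) is strictly decreasing on the interval (β_0, β_1), where dim_H denotes Hausdorff dimension and U^{(β)} is the set of x ∈ A_β having exactly one β-expansion. -/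
open Set

/-- `d` is a β-expansion of `x`: digits in `{0,…,⌈β⌉−1}` and `x = Σ_{n≥1} d_n β^{-n}`. -/
def IsBetaExpansion (β : ℝ) (x : ℝ) (d : ℕ → ℤ) : Prop :=
  (∀ n, 0 ≤ d n ∧ d n ≤ ⌈β⌉ - 1) ∧ x = ∑' n : ℕ, (d n : ℝ) / β ^ (n + 1)

/-- The univoque set in base `β`: points of `A_β = [0, (⌈β⌉−1)/(β−1)]` having exactly
one β-expansion. -/
def univoqueSet (β : ℝ) : Set ℝ :=
  {x | x ∈ Icc (0 : ℝ) (((⌈β⌉ : ℝ) - 1) / (β - 1)) ∧ ∃! d : ℕ → ℤ, IsBetaExpansion β x d}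

/-!
Put `M = ⌈β⌉ - 1 ≥ 2` and suppose `M < β` and `β² ≤ Mβ + 1`. Then
`dim_H(U^{(β)}) = log (M - 1) / log β`, which strictly decreases in `β` once `M ≥ 3`.

If `0 ≤ d_n < M` and `d` is a unique expansion, then the tail after `d_n` has value less than `1`,
since otherwise `d_n` could be raised by one; `β² ≤ Mβ + 1` then excludes `d_{n+1} = M`.
Symmetrically a digit `> 0` is followed by a digit `> 0`, so unique expansions other than `0^∞` and
`M^∞` end in digits `1, …, M - 1`. Conversely any sequence of such digits is a unique expansion,
because its tails lie strictly within `1` of every possible tail. Hence `U^{(β)}` has the dimension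
of the set `K_β` of values of sequences over `N = M - 1` consecutive digits.

For `β > N` and `γ > 1`, sending the value of a sequence in base `β` to its value in base `γ` is
Hölder of exponent `log γ / log β`, whence `log γ · dim_H K_γ ≤ log β · dim_H K_β`. At `γ = N` the
set `K_γ` is an interval, which gives `log N ≤ log β · dim_H K_β`; exchanging the roles of `β` and
`γ` and letting `γ ↓ N`, where `dim_H K_γ ≤ 1`, gives the reverse inequality.
-/

open Filter Topology
open scoped NNReal

section HolderComparison

variable {ι X Y : Type*} [EMetricSpace X] [EMetricSpace Y]

theorem dimH_image_le_of_edist_le_rpow {f : ι → X} {g : ι → Y} {s : Set ι} {C r : ℝ≥0}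
    (hr : 0 < r) (h : ∀ i ∈ s, ∀ j ∈ s, edist (g i) (g j) ≤ C * edist (f i) (f j) ^ (r : ℝ)) :
    dimH (g '' s) ≤ dimH (f '' s) / r := by
  rcases s.eq_empty_or_nonempty with rfl | ⟨i₀, -⟩
  · simp
  have : Nonempty ι := ⟨i₀⟩
  let φ : X → Y := fun x => g (Function.invFunOn f s x)
  have hφ : ∀ i ∈ s, φ (f i) = g i := fun i hi => by
    have hmem : ∃ j ∈ s, f j = f i := ⟨i, hi, rfl⟩
    have hle := h _ (Function.invFunOn_mem hmem) i hi
    rwa [Function.invFunOn_eq hmem, edist_self, ENNReal.zero_rpow_of_pos (by exact_mod_cast hr),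
      mul_zero, nonpos_iff_eq_zero, edist_eq_zero] at hle
  have hHolder : HolderOnWith C r φ (f '' s) := by
    rintro _ ⟨i, hi, rfl⟩ _ ⟨j, hj, rfl⟩
    rw [hφ i hi, hφ j hj]
    exact h i hi j hj
  have himage : g '' s = φ '' (f '' s) := by
    rw [image_image]
    exact image_congr fun i hi => (hφ i hi).symm
  rw [himage]
  exact hHolder.dimH_image_le hr

end HolderComparison

/-- The value `∑_{n ≥ 1} d_n β^{-n}` of a digit sequence. As in `IsBetaExpansion`, the paper's
digit `d_{n+1}` is `d n`. -/
noncomputable def betaValue (β : ℝ) (d : ℕ → ℤ) : ℝ := ∑' n : ℕ, (d n : ℝ) / β ^ (n + 1)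

/-- The sequences of integer digits between `a` and `b`: all digit sequences for `a = 0` and
`b = ⌈β⌉ - 1`, and those avoiding the extreme digits for `a = 1` and `b = ⌈β⌉ - 2`. -/
def digitSeqs (a b : ℤ) : Set (ℕ → ℤ) := {d | ∀ n, d n ∈ Icc a b}

section BetaValue

variable {β : ℝ} {a b a' b' : ℤ} {d e : ℕ → ℤ}

theorem hasSum_div_pow_succ (hβ : 1 < β) (c : ℝ) :
    HasSum (fun n : ℕ => c / β ^ (n + 1)) (c / (β - 1)) := by
  have hβ0 : β ≠ 0 := by positivity
  have hβ1 : β - 1 ≠ 0 := by linarith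
  convert! (hasSum_geometric_of_lt_one (by positivity) (inv_lt_one_of_one_lt₀ hβ)).mul_left (c / β)
    using 1
  · funext n
    rw [inv_pow, pow_succ']
    field_simp
  · field_simp

theorem summable_div_pow_succ (hβ : 1 < β) (hd : d ∈ digitSeqs a b) :
    Summable fun n : ℕ => (d n : ℝ) / β ^ (n + 1) := by
  refine Summable.of_norm_bounded (hasSum_div_pow_succ hβ (max |(a : ℝ)| |(b : ℝ)|)).summable
    fun n => ?_
  have hdn : |(d n : ℝ)| ≤ max |(a : ℝ)| |(b : ℝ)| :=
    abs_le_max_abs_abs (by exact_mod_cast (hd n).1) (by exact_mod_cast (hd n).2)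
  have hpow : 0 < β ^ (n + 1) := by positivity
  rw [Real.norm_eq_abs, abs_div, abs_of_pos hpow]
  gcongr

theorem hasSum_betaValue (hβ : 1 < β) (hd : d ∈ digitSeqs a b) :
    HasSum (fun n : ℕ => (d n : ℝ) / β ^ (n + 1)) (betaValue β d) :=
  (summable_div_pow_succ hβ hd).hasSum

theorem betaValue_mem_Icc (hβ : 1 < β) (hd : d ∈ digitSeqs a b) :
    betaValue β d ∈ Icc (a / (β - 1)) (b / (β - 1)) := by
  constructor
  · refine hasSum_le (fun n => ?_) (hasSum_div_pow_succ hβ a) (hasSum_betaValue hβ hd)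
    gcongr
    exact (hd n).1
  · refine hasSum_le (fun n => ?_) (hasSum_betaValue hβ hd) (hasSum_div_pow_succ hβ b)
    gcongr
    exact (hd n).2

theorem betaValue_eq_sum_add_shift (hβ : 1 < β) (hd : d ∈ digitSeqs a b) (n : ℕ) :
    betaValue β d =
      ∑ k ∈ Finset.range n, (d k : ℝ) / β ^ (k + 1) + betaValue β (fun k => d (k + n)) / β ^ n := by
  rw [betaValue, ← (summable_div_pow_succ hβ hd).sum_add_tsum_nat_add n, betaValue,
    ← tsum_div_const]
  congr! 3 with k
  rw [add_right_comm, pow_add, div_div]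

theorem betaValue_shift (hβ : 1 < β) (hd : d ∈ digitSeqs a b) (n : ℕ) :
    betaValue β (fun k => d (k + n)) = (d n + betaValue β fun k => d (k + (n + 1))) / β := by
  have h := betaValue_eq_sum_add_shift (d := fun k => d (k + n)) hβ (fun k => hd _) 1
  simp only [Finset.sum_range_one, zero_add, pow_one, add_assoc, add_comm 1 n] at h
  rw [h, add_div]

theorem betaValue_sub_of_eqOn (hβ : 1 < β) (hd : d ∈ digitSeqs a b) (he : e ∈ digitSeqs a' b')
    {n : ℕ} (heq : ∀ k < n, d k = e k) :
    betaValue β d - betaValue β e =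
      (betaValue β (fun k => d (k + n)) - betaValue β fun k => e (k + n)) / β ^ n := by
  have hsum : ∑ k ∈ Finset.range n, (d k : ℝ) / β ^ (k + 1) =
      ∑ k ∈ Finset.range n, (e k : ℝ) / β ^ (k + 1) :=
    Finset.sum_congr rfl fun k hk => by rw [heq k (Finset.mem_range.1 hk)]
  rw [betaValue_eq_sum_add_shift hβ hd n, betaValue_eq_sum_add_shift hβ he n, hsum]
  ring

theorem abs_betaValue_sub_le (hβ : 1 < β) (hd : d ∈ digitSeqs a b) (he : e ∈ digitSeqs a b)
    {n : ℕ} (heq : ∀ k < n, d k = e k) :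
    |betaValue β d - betaValue β e| ≤ (b - a) / (β - 1) * (β ^ n)⁻¹ := by
  rw [betaValue_sub_of_eqOn hβ hd he heq, abs_div, abs_of_pos (by positivity : 0 < β ^ n),
    div_eq_mul_inv, sub_div, ← Real.dist_eq]
  gcongr
  exact Real.dist_le_of_mem_Icc (betaValue_mem_Icc hβ fun k => hd _)
    (betaValue_mem_Icc hβ fun k => he _)

theorem le_abs_betaValue_sub (hβ : 1 < β) (hd : d ∈ digitSeqs a b) (he : e ∈ digitSeqs a' b')
    {n : ℕ} (heq : ∀ k < n, d k = e k) (hne : d n ≠ e n) :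
    (1 - |(betaValue β fun k => d (k + (n + 1))) - betaValue β fun k => e (k + (n + 1))|) /
      β ^ (n + 1) ≤ |betaValue β d - betaValue β e| := by
  have hdigit : (1 : ℝ) ≤ |(d n : ℝ) - e n| := by
    exact_mod_cast Int.one_le_abs (sub_ne_zero.2 hne)
  rw [betaValue_sub_of_eqOn hβ hd he heq, betaValue_shift hβ hd n, betaValue_shift hβ he n,
    ← sub_div, div_div, ← pow_succ', abs_div, abs_of_pos (by positivity : 0 < β ^ (n + 1)),
    add_sub_add_comm]
  gcongr
  exact (sub_le_sub_right hdigit _).trans (abs_sub_abs_le_abs_add _ _)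

theorem betaValue_const_sub (hβ : 1 < β) (hd : d ∈ digitSeqs a b) (c : ℤ) :
    (betaValue β fun n => c - d n) = c / (β - 1) - betaValue β d := by
  simpa only [betaValue, Int.cast_sub, sub_div] using
    ((hasSum_div_pow_succ hβ (c : ℝ)).sub (hasSum_betaValue hβ hd)).tsum_eq

theorem betaValue_eq_of_orbit (hβ : 1 < β) (hd : d ∈ digitSeqs a b) {o : ℕ → ℝ} {C : ℝ}
    (hC : ∀ n, |o n| ≤ C) (ho : ∀ n, o (n + 1) = β * o n - d n) : betaValue β d = o 0 := by
  have hpartial : ∀ n, ∑ k ∈ Finset.range n, (d k : ℝ) / β ^ (k + 1) = o 0 - o n / β ^ n := by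
    intro n
    induction n with
    | zero => simp
    | succ n ih =>
      rw [Finset.sum_range_succ, ih, ho]
      field_simp
      ring
  have hremainder : Tendsto (fun n => o n / β ^ n) atTop (𝓝 0) := by
    refine squeeze_zero_norm (fun n => ?_)
      (tendsto_const_nhds.div_atTop (tendsto_pow_atTop_atTop_of_one_lt hβ) :
        Tendsto (fun n : ℕ => C / β ^ n) atTop (𝓝 0))
    rw [Real.norm_eq_abs, abs_div, abs_of_pos (by positivity : 0 < β ^ n)]
    gcongr
    exact hC n
  have hlim := (hasSum_betaValue hβ hd).tendsto_sum_nat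
  simp only [hpartial] at hlim
  simpa using tendsto_nhds_unique hlim (tendsto_const_nhds.sub hremainder)

theorem exists_digit_mul_sub_mem_Icc (hβ : 1 < β) (hab : β ≤ b - a + 1) {y : ℝ}
    (hy : y ∈ Icc (a / (β - 1)) (b / (β - 1))) :
    ∃ j ∈ Icc a b, β * y - j ∈ Icc (a / (β - 1)) (b / (β - 1)) := by
  have hβ1 : 0 < β - 1 := by linarith
  have hfix : ∀ c : ℝ, β * (c / (β - 1)) - c = c / (β - 1) := fun c => by field_simp; ring
  have hlow : a / (β - 1) ≤ β * y - a := by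
    rw [← hfix a]
    gcongr
    exact hy.1
  have hhigh : β * y - b ≤ b / (β - 1) := by
    rw [← hfix b]
    gcongr
    exact hy.2
  have hlength : a / (β - 1) + 1 ≤ b / (β - 1) := by
    rw [div_add_one hβ1.ne']
    gcongr
    linarith
  have hle : a ≤ b := by
    have : (a : ℝ) ≤ b := by linarith
    exact_mod_cast this
  rcases le_total ⌊β * y - a / (β - 1)⌋ b with hj | hj
  · refine ⟨⌊β * y - a / (β - 1)⌋, ⟨Int.le_floor.2 (by linarith), hj⟩, ?_, ?_⟩
    · linarith [Int.floor_le (β * y - a / (β - 1))]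
    · linarith [Int.lt_floor_add_one (β * y - a / (β - 1))]
  · exact ⟨b, ⟨hle, le_rfl⟩, by linarith [Int.le_floor.1 hj], hhigh⟩

theorem image_betaValue_digitSeqs (hβ : 1 < β) (hab : β ≤ b - a + 1) :
    betaValue β '' digitSeqs a b = Icc (a / (β - 1)) (b / (β - 1)) := by
  refine Subset.antisymm (image_subset_iff.2 fun d hd => betaValue_mem_Icc hβ hd) fun x hx => ?_
  choose! j hj hstep using fun y => exists_digit_mul_sub_mem_Icc (y := y) hβ hab
  let o : ℕ → ℝ := fun n => (fun y => β * y - j y)^[n] x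
  have ho : ∀ n, o (n + 1) = β * o n - j (o n) := fun n => by
    simp only [o, Function.iterate_succ_apply']
  have hmem : ∀ n, o n ∈ Icc (a / (β - 1)) (b / (β - 1)) := fun n => by
    induction n with
    | zero => exact hx
    | succ n ih => rw [ho]; exact hstep _ ih
  have hd : (fun n => j (o n)) ∈ digitSeqs a b := fun n => hj _ (hmem n)
  exact ⟨_, hd, betaValue_eq_of_orbit hβ hd
    (fun n => abs_le_max_abs_abs (hmem n).1 (hmem n).2) ho⟩

end BetaValue

section Dimension

variable {β γ : ℝ} {a b : ℤ}

theorem inv_pow_firstDiff_le (hβ : 1 < β) (hab : b - a + 1 < β) {d e : ℕ → ℤ}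
    (hd : d ∈ digitSeqs a b) (he : e ∈ digitSeqs a b) (hne : d ≠ e) :
    (β ^ PiNat.firstDiff d e)⁻¹ ≤
      β / (1 - (b - a) / (β - 1)) * |betaValue β d - betaValue β e| := by
  set n := PiNat.firstDiff d e
  have hgap : 0 < 1 - (b - a) / (β - 1) := by
    rw [sub_pos, div_lt_one] <;> linarith
  have htail : |(betaValue β fun k => d (k + (n + 1))) - betaValue β fun k => e (k + (n + 1))| ≤
      (b - a) / (β - 1) := by
    simpa using abs_betaValue_sub_le (n := 0) hβ (fun k => hd _) (fun k => he _) (by simp)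
  calc (β ^ n)⁻¹ = β / (1 - (b - a) / (β - 1)) * ((1 - (b - a) / (β - 1)) / β ^ (n + 1)) := by
        have := hgap.ne'
        rw [pow_succ]
        field_simp
    _ ≤ β / (1 - (b - a) / (β - 1)) * |betaValue β d - betaValue β e| := by
        gcongr
        refine le_trans ?_ (le_abs_betaValue_sub hβ hd he
          (fun k => PiNat.apply_eq_of_lt_firstDiff) (PiNat.apply_firstDiff_ne hne))
        gcongr

theorem abs_betaValue_sub_le_rpow (hβ : 1 < β) (hab : b - a + 1 < β) (hγ : 1 < γ) {d e : ℕ → ℤ}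
    (hd : d ∈ digitSeqs a b) (he : e ∈ digitSeqs a b) :
    |betaValue γ d - betaValue γ e| ≤
      (b - a) / (γ - 1) * (β / (1 - (b - a) / (β - 1))) ^ Real.logb β γ *
        |betaValue β d - betaValue β e| ^ Real.logb β γ := by
  have hr : 0 < Real.logb β γ := Real.logb_pos hβ hγ
  rcases eq_or_ne d e with rfl | hne
  · simp [Real.zero_rpow hr.ne']
  have hgap : 0 < 1 - (b - a) / (β - 1) := by
    rw [sub_pos, div_lt_one] <;> linarith
  have hwidth : (0 : ℝ) ≤ b - a := by
    exact_mod_cast sub_nonneg.2 ((hd 0).1.trans (hd 0).2)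
  set n := PiNat.firstDiff d e
  have hpow : (γ ^ n)⁻¹ = ((β ^ n)⁻¹) ^ Real.logb β γ := by
    rw [Real.inv_rpow (by positivity), ← Real.rpow_pow_comm (by positivity),
      Real.rpow_logb (by positivity) hβ.ne' (by positivity)]
  calc |betaValue γ d - betaValue γ e|
      ≤ (b - a) / (γ - 1) * (γ ^ n)⁻¹ :=
        abs_betaValue_sub_le hγ hd he fun k => PiNat.apply_eq_of_lt_firstDiff
    _ ≤ (b - a) / (γ - 1) *
          (β / (1 - (b - a) / (β - 1)) * |betaValue β d - betaValue β e|) ^ Real.logb β γ := by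
        rw [hpow]
        have : 0 ≤ γ - 1 := by linarith
        gcongr
        exact inv_pow_firstDiff_le hβ hab hd he hne
    _ = _ := by rw [Real.mul_rpow (by positivity) (abs_nonneg _), mul_assoc]

theorem ofReal_log_mul_dimH_image_betaValue_le (hβ : 1 < β) (hab : b - a + 1 < β) (hγ : 1 < γ) :
    ENNReal.ofReal (Real.log γ) * dimH (betaValue γ '' digitSeqs a b) ≤
      ENNReal.ofReal (Real.log β) * dimH (betaValue β '' digitSeqs a b) := by
  have hr : 0 < Real.logb β γ := Real.logb_pos hβ hγ
  set C : ℝ := (b - a) / (γ - 1) * (β / (1 - (b - a) / (β - 1))) ^ Real.logb β γ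
  have hdim := dimH_image_le_of_edist_le_rpow (f := betaValue β) (g := betaValue γ)
    (s := digitSeqs a b) (C := C.toNNReal) (Real.toNNReal_pos.2 hr) fun d hd e he => by
      rw [Real.coe_toNNReal _ hr.le, edist_dist, edist_dist, Real.dist_eq, Real.dist_eq,
        ENNReal.ofReal_rpow_of_nonneg (abs_nonneg _) hr.le, ← ENNReal.ofReal,
        ← ENNReal.ofReal_mul' (by positivity)]
      exact ENNReal.ofReal_le_ofReal (abs_betaValue_sub_le_rpow hβ hab hγ hd he)
  have hlog : ENNReal.ofReal (Real.log γ) =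
      ENNReal.ofReal (Real.log β) * ENNReal.ofReal (Real.logb β γ) := by
    rw [← ENNReal.ofReal_mul (Real.log_pos hβ).le, ← Real.log_div_log,
      mul_div_cancel₀ _ (Real.log_pos hβ).ne']
  rw [hlog, mul_assoc]
  gcongr
  rw [mul_comm]
  exact ENNReal.mul_le_of_le_div hdim

theorem ofReal_log_mul_dimH_image_betaValue_le_log (hβ : 1 < β) (hab : a ≤ b) :
    ENNReal.ofReal (Real.log β) * dimH (betaValue β '' digitSeqs a b) ≤
      ENNReal.ofReal (Real.log (b - a + 1)) := by
  have hab1 : (1 : ℝ) ≤ b - a + 1 := by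
    have : (a : ℝ) ≤ b := by exact_mod_cast hab
    linarith
  have hlim : Tendsto (fun γ : ℝ => ENNReal.ofReal (Real.log γ)) (𝓝[>] (b - a + 1))
      (𝓝 (ENNReal.ofReal (Real.log (b - a + 1)))) :=
    ENNReal.tendsto_ofReal
      ((Real.continuousAt_log (by positivity)).tendsto.mono_left nhdsWithin_le_nhds)
  refine ge_of_tendsto hlim (eventually_mem_nhdsWithin.mono fun γ (hγ : b - a + 1 < γ) => ?_)
  calc ENNReal.ofReal (Real.log β) * dimH (betaValue β '' digitSeqs a b)
      ≤ ENNReal.ofReal (Real.log γ) * dimH (betaValue γ '' digitSeqs a b) :=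
        ofReal_log_mul_dimH_image_betaValue_le (hab1.trans_lt hγ) hγ hβ
    _ ≤ ENNReal.ofReal (Real.log γ) * dimH (univ : Set ℝ) := by
        gcongr
        exact subset_univ _
    _ = ENNReal.ofReal (Real.log γ) := by rw [Real.dimH_univ, mul_one]

theorem ofReal_log_le_mul_dimH_image_betaValue (hab : a ≤ b) (habβ : b - a + 1 < β) :
    ENNReal.ofReal (Real.log (b - a + 1)) ≤
      ENNReal.ofReal (Real.log β) * dimH (betaValue β '' digitSeqs a b) := by
  rcases hab.eq_or_lt with rfl | hlt
  · simp
  have hN : (1 : ℝ) < b - a + 1 := by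
    have : (a : ℝ) < b := by exact_mod_cast hlt
    linarith
  have hdim : dimH (betaValue (b - a + 1) '' digitSeqs a b) = 1 := by
    have hinterior : (interior (betaValue (b - a + 1) '' digitSeqs a b)).Nonempty := by
      rw [image_betaValue_digitSeqs hN le_rfl, interior_Icc, nonempty_Ioo]
      gcongr
    simpa using Real.dimH_of_nonempty_interior hinterior
  simpa [hdim] using ofReal_log_mul_dimH_image_betaValue_le (hN.trans habβ) habβ hN

theorem dimH_image_betaValue_digitSeqs (hab : a ≤ b) (habβ : b - a + 1 < β) :
    dimH (betaValue β '' digitSeqs a b) =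
      ENNReal.ofReal (Real.log (b - a + 1) / Real.log β) := by
  have hβ : 1 < β := by
    have : (a : ℝ) ≤ b := by exact_mod_cast hab
    linarith
  have hlog := Real.log_pos hβ
  rw [ENNReal.ofReal_div_of_pos hlog,
    ENNReal.eq_div_iff (by simpa using hlog) ENNReal.ofReal_ne_top]
  exact (ofReal_log_mul_dimH_image_betaValue_le_log hβ hab).antisymm
    (ofReal_log_le_mul_dimH_image_betaValue hab habβ)

theorem dimH_image_betaValue_of_shift_mem_le (hβ : 1 < β) (D : Set (ℕ → ℤ)) (n : ℕ) :
    dimH (betaValue β '' {d ∈ digitSeqs a b | (fun k => d (k + n)) ∈ D}) ≤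
      dimH (betaValue β '' D) := by
  let g : (Fin n → ℤ) → ℝ → ℝ := fun p y => ∑ k, (p k : ℝ) / β ^ (k + 1 : ℕ) + y / β ^ n
  have hcover : betaValue β '' {d ∈ digitSeqs a b | (fun k => d (k + n)) ∈ D} ⊆
      ⋃ p, g p '' (betaValue β '' D) := by
    rintro _ ⟨d, ⟨hd, hdD⟩, rfl⟩
    refine mem_iUnion.2 ⟨fun k => d k, _, mem_image_of_mem _ hdD, ?_⟩
    rw [betaValue_eq_sum_add_shift hβ hd n, Finset.sum_range]
  refine (dimH_mono hcover).trans ?_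
  rw [dimH_iUnion]
  refine iSup_le fun p => LipschitzWith.dimH_image_le (K := (β ^ n)⁻¹.toNNReal)
    (LipschitzWith.of_dist_le_mul fun x y => le_of_eq ?_) _
  rw [dist_add_left, div_eq_inv_mul, div_eq_inv_mul, Real.coe_toNNReal _ (by positivity),
    Real.dist_eq, Real.dist_eq, ← mul_sub, abs_mul, abs_of_pos (by positivity)]

end Dimension

/-- `d` is the only sequence with digits in `{0, …, M}` having its value in base `β`; for
`M = ⌈β⌉ - 1` these are the expansions of the univoque points. -/
def IsUniqueExpansion (β : ℝ) (M : ℤ) (d : ℕ → ℤ) : Prop :=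
  d ∈ digitSeqs 0 M ∧ ∀ e ∈ digitSeqs 0 M, betaValue β e = betaValue β d → e = d

theorem univoqueSet_eq_image {β : ℝ} {M : ℤ} (hβ : 1 < β) (hM : ⌈β⌉ = M + 1) :
    univoqueSet β = betaValue β '' {d | IsUniqueExpansion β M d} := by
  have hexp : ∀ x d, IsBetaExpansion β x d ↔ d ∈ digitSeqs 0 M ∧ x = betaValue β d := fun x d => by
    simp [IsBetaExpansion, digitSeqs, betaValue, hM]
  ext x
  simp only [univoqueSet, hexp, mem_ofPred_eq, mem_image]
  constructor
  · rintro ⟨-, d, ⟨hd, rfl⟩, huniq⟩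
    exact ⟨d, ⟨hd, fun e he hv => huniq e ⟨he, hv.symm⟩⟩, rfl⟩
  · rintro ⟨d, hd, rfl⟩
    refine ⟨?_, d, ⟨hd.1, rfl⟩, fun e he => hd.2 e he.1 he.2.symm⟩
    simpa [hM] using betaValue_mem_Icc hβ hd.1

theorem isUniqueExpansion_of_mem_digitSeqs {β : ℝ} {M : ℤ} {d : ℕ → ℤ} (hβ : 1 < β) (hM : M < β)
    (hd : d ∈ digitSeqs 1 (M - 1)) : IsUniqueExpansion β M d := by
  refine ⟨fun n => ⟨zero_le_one.trans (hd n).1, by linarith [(hd n).2]⟩, fun e he hv => ?_⟩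
  by_contra hne
  set n := PiNat.firstDiff e d
  have hsep := le_abs_betaValue_sub hβ he hd
    (fun k => PiNat.apply_eq_of_lt_firstDiff) (PiNat.apply_firstDiff_ne hne)
  have htail :
      |(betaValue β fun k => e (k + (n + 1))) - betaValue β fun k => d (k + (n + 1))| < 1 := by
    have hetail := betaValue_mem_Icc hβ fun k => he (k + (n + 1))
    have hdtail := betaValue_mem_Icc hβ fun k => hd (k + (n + 1))
    have hsmall : (M - 1) / (β - 1) < 1 := by rw [div_lt_one] <;> linarith
    push_cast [sub_div, zero_div] at hetail hdtail hsmall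
    rw [abs_lt]
    constructor <;> linarith [hetail.1, hetail.2, hdtail.1, hdtail.2]
  rw [hv, sub_self, abs_zero] at hsep
  exact hsep.not_gt (div_pos (sub_pos.2 htail) (by positivity))

namespace IsUniqueExpansion

variable {β : ℝ} {M : ℤ} {d : ℕ → ℤ}

theorem reflect (h : IsUniqueExpansion β M d) (hβ : 1 < β) :
    IsUniqueExpansion β M fun n => M - d n := by
  have hmem : ∀ e ∈ digitSeqs 0 M, (fun n => M - e n) ∈ digitSeqs 0 M :=
    fun e he n => ⟨sub_nonneg.2 (he n).2, sub_le_self _ (he n).1⟩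
  refine ⟨hmem d h.1, fun e he hv => ?_⟩
  have hrefl := h.2 _ (hmem e he) (by
    rw [betaValue_const_sub hβ he, hv, betaValue_const_sub hβ h.1, sub_sub_cancel])
  simp [← hrefl]

theorem betaValue_shift_lt (h : IsUniqueExpansion β M d) (hβ : 1 < β) (hM : β ≤ M + 1) {n : ℕ}
    (hn : d n < M) : (betaValue β fun k => d (k + (n + 1))) < 1 := by
  by_contra! hge
  have htail := (betaValue_mem_Icc hβ fun k => h.1 (k + (n + 1))).2
  obtain ⟨e, he, hv⟩ :
      (betaValue β fun k => d (k + (n + 1))) - 1 ∈ betaValue β '' digitSeqs 0 M := by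
    rw [image_betaValue_digitSeqs hβ (by simpa using hM), Int.cast_zero, zero_div]
    exact ⟨by linarith, by linarith⟩
  let d' : ℕ → ℤ := fun k => if k < n then d k else if k = n then d n + 1 else e (k - (n + 1))
  have hd' : d' ∈ digitSeqs 0 M := fun k => by
    rcases lt_trichotomy k n with hk | rfl | hk
    · simpa [d', hk] using h.1 k
    · simpa [d'] using And.intro (by linarith [(h.1 k).1]) hn
    · simpa [d', hk.not_gt, hk.ne'] using he _
  have hd'tail : (fun k => d' (k + (n + 1))) = e := by
    funext k
    simp [d', show ¬ k + (n + 1) < n by omega, show k + (n + 1) ≠ n by omega]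
  have hvalue : betaValue β d' = betaValue β d := by
    rw [← sub_eq_zero, betaValue_sub_of_eqOn hβ hd' h.1 (n := n) (fun k hk => if_pos hk),
      betaValue_shift hβ hd' n, betaValue_shift hβ h.1 n, hd'tail, hv]
    simp [d']
  have := congrFun (h.2 d' hd' hvalue) n
  simp [d'] at this

theorem lt_betaValue_shift (h : IsUniqueExpansion β M d) (hβ : 1 < β) (hM : β ≤ M + 1) {n : ℕ}
    (hn : 0 < d n) : M / (β - 1) - 1 < betaValue β fun k => d (k + (n + 1)) := by
  have hlt := (h.reflect hβ).betaValue_shift_lt hβ hM (n := n) (sub_lt_self M hn)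
  rw [betaValue_const_sub hβ fun k => h.1 (k + (n + 1))] at hlt
  linarith

theorem succ_lt (h : IsUniqueExpansion β M d) (hM : 1 ≤ M) (hMβ : M < β) (hβM : β ^ 2 ≤ M * β + 1)
    {n : ℕ} (hn : d n < M) : d (n + 1) < M := by
  have hM1 : (1 : ℝ) ≤ M := by exact_mod_cast hM
  have hβ : 1 < β := by linarith
  have hceil : β ≤ M + 1 := by nlinarith
  refine lt_of_le_of_ne (h.1 _).2 fun heq => ?_
  have hlt := h.betaValue_shift_lt hβ hceil hn
  have hgt := h.lt_betaValue_shift hβ hceil (n := n + 1) (by omega)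
  rw [betaValue_shift hβ h.1, heq, div_lt_one (by positivity)] at hlt
  have : M / (β - 1) < β - M + 1 := by linarith
  rw [div_lt_iff₀ (by linarith)] at this
  nlinarith

theorem succ_pos (h : IsUniqueExpansion β M d) (hM : 1 ≤ M) (hMβ : M < β)
    (hβM : β ^ 2 ≤ M * β + 1) {n : ℕ} (hn : 0 < d n) : 0 < d (n + 1) := by
  have hβ : 1 < β := lt_of_le_of_lt (by exact_mod_cast hM) hMβ
  have := (h.reflect hβ).succ_lt hM hMβ hβM (n := n) (sub_lt_self M hn)
  omega

theorem eq_zero_or_eq_or_eventually_mem (h : IsUniqueExpansion β M d) (hM : 1 ≤ M) (hMβ : M < β)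
    (hβM : β ^ 2 ≤ M * β + 1) :
    d = (fun _ => 0) ∨ d = (fun _ => M) ∨ ∃ n, (fun k => d (k + n)) ∈ digitSeqs 1 (M - 1) := by
  have hlt {n k} (hnk : n ≤ k) (hn : d n < M) : d k < M :=
    Nat.le_induction hn (fun _ _ => h.succ_lt hM hMβ hβM) k hnk
  have hpos {n k} (hnk : n ≤ k) (hn : 0 < d n) : 0 < d k :=
    Nat.le_induction hn (fun _ _ => h.succ_pos hM hMβ hβM) k hnk
  by_cases hinner : ∃ n, 0 < d n ∧ d n < M
  · obtain ⟨n, hn0, hnM⟩ := hinner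
    exact Or.inr (Or.inr ⟨n, fun k => ⟨hpos (n.le_add_left k) hn0,
      Int.le_sub_one_of_lt (hlt (n.le_add_left k) hnM)⟩⟩)
  · push Not at hinner
    rcases (h.1 0).1.eq_or_lt with h0 | h0
    · refine Or.inl (funext fun n => ?_)
      by_contra hne
      exact (hlt n.zero_le (by omega)).not_ge (hinner n ((h.1 n).1.lt_of_ne' hne))
    · exact Or.inr (Or.inl (funext fun n =>
        (h.1 n).2.antisymm (hinner n (hpos n.zero_le h0))))

end IsUniqueExpansion

section UnivoqueSet

variable {β : ℝ} {M : ℤ}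

theorem dimH_univoqueSet_eq_dimH_image (hM : 1 ≤ M) (hMβ : M < β) (hβM : β ^ 2 ≤ M * β + 1) :
    dimH (univoqueSet β) = dimH (betaValue β '' digitSeqs 1 (M - 1)) := by
  have hM1 : (1 : ℝ) ≤ M := by exact_mod_cast hM
  have hβ : 1 < β := by linarith
  have hceil : ⌈β⌉ = M + 1 := by
    rw [Int.ceil_eq_iff]
    push_cast
    constructor <;> nlinarith
  rw [univoqueSet_eq_image hβ hceil]
  refine le_antisymm ?_ (dimH_mono
    (image_mono fun d hd => isUniqueExpansion_of_mem_digitSeqs hβ hMβ hd))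
  have hcover : betaValue β '' {d | IsUniqueExpansion β M d} ⊆
      {betaValue β fun _ => 0, betaValue β fun _ => M} ∪
        ⋃ n, betaValue β '' {d ∈ digitSeqs 0 M | (fun k => d (k + n)) ∈ digitSeqs 1 (M - 1)} := by
    rintro _ ⟨d, hd, rfl⟩
    rcases hd.eq_zero_or_eq_or_eventually_mem hM hMβ hβM with rfl | rfl | ⟨n, hn⟩
    · simp
    · simp
    · exact Or.inr (mem_iUnion.2 ⟨n, d, ⟨hd.1, hn⟩, rfl⟩)
  refine (dimH_mono hcover).trans ?_
  rw [dimH_union, dimH_iUnion, dimH_finite (toFinite _)]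
  exact max_le zero_le (iSup_le fun n => dimH_image_betaValue_of_shift_mem_le hβ _ n)

theorem dimH_univoqueSet (hM : 2 ≤ M) (hMβ : M < β) (hβM : β ^ 2 ≤ M * β + 1) :
    dimH (univoqueSet β) = ENNReal.ofReal (Real.log (M - 1) / Real.log β) := by
  rw [dimH_univoqueSet_eq_dimH_image (by omega) hMβ hβM, dimH_image_betaValue_digitSeqs (by omega)]
  · norm_num
  · push_cast
    linarith

end UnivoqueSet

theorem stmt17_general {M : ℤ} (hM : 3 ≤ M) :
    StrictAntiOn (fun β => dimH (univoqueSet β)) (Ioc (M : ℝ) ((M + √(M ^ 2 + 4)) / 2)) := by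
  have hM3 : (3 : ℝ) ≤ M := by exact_mod_cast hM
  have hdim : ∀ β ∈ Ioc (M : ℝ) ((M + √(M ^ 2 + 4)) / 2),
      dimH (univoqueSet β) = ENNReal.ofReal (Real.log (M - 1) / Real.log β) := fun β hβ => by
    have hroot : 2 * β - M ≤ √(M ^ 2 + 4) := by linarith [hβ.2]
    rw [Real.le_sqrt (by linarith [hβ.1]) (by positivity)] at hroot
    exact dimH_univoqueSet (by omega) hβ.1 (by linarith)
  intro β hβ γ hγ hlt
  have hβ1 : 1 < β := by linarith [hβ.1]
  have hlogβ : 0 < Real.log β := Real.log_pos hβ1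
  have hlogM : 0 < Real.log (M - 1) := Real.log_pos (by linarith)
  simp only [hdim β hβ, hdim γ hγ]
  rw [ENNReal.ofReal_lt_ofReal_iff (by positivity)]
  gcongr

/-- there is a nonempty open interval `(β₀, β₁) ⊆ (1,∞)` on which the
map `β ↦ dim_H(U^{(β)})` is strictly decreasing. -/
theorem stmt17 :
    ∃ β₀ β₁ : ℝ, 1 < β₀ ∧ β₀ < β₁ ∧
      StrictAntiOn (fun β => dimH (univoqueSet β)) (Ioo β₀ β₁) := by
  have hsqrt : 3 < √(13 : ℝ) := Real.lt_sqrt_of_sq_lt (by norm_num)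
  refine ⟨3, (3 + √13) / 2, by norm_num, by linarith, ?_⟩
  convert (stmt17_general (M := 3) le_rfl).mono Ioo_subset_Ioc_self <;> norm_num
end
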